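/- (No vanishing for minimizing sequences) Let k be a nonzero integer and let {φ_n} ⊂ X satisfy d(φ_n) = k for all n and sup_n ∫_{ℝ³} f_n dx < ∞, where f_n = |∇φ_n|² + |A(φ_n)|² + |φ_n − P|⁶. Then vanishing cannot occur: it is not the case that for every R > 0, lim_{n→∞} sup_{y ∈ ℝ³} ∫_{B(y,R)} f_n dx = 0; i.e., there exist R > 0, δ > 0 and a subsequence along which sup_{y ∈ ℝ³} ∫_{B(y,R)} f_n dx ≥ δ. -/

import Mathlib

/- Common setting: Skyrme maps φ : ℝ³ → S³ ⊂ ℝ⁴ with weak partial derivatives. -/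

open MeasureTheory Real Filter
open scoped Topology ENNReal BigOperators

noncomputable section

abbrev R3 : Type := Fin 3 → ℝ
abbrev R4 : Type := Fin 4 → ℝ

/-- Euclidean dot product on ℝ⁴. -/
def dot (u v : R4) : ℝ := ∑ a, u a * v a

/-- Squared Euclidean norm on ℝ⁴. -/
def nsq (u : R4) : ℝ := dot u u

/-- |u∧v|² = |u|²|v|² − ⟨u,v⟩². -/
def wedgeSq (u v : R4) : ℝ := nsq u * nsq v - (dot u v) ^ 2

/-- Gram determinant of three vectors of ℝ⁴. -/
def gram (u v w : R4) : ℝ :=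
  Matrix.det !![dot u u, dot u v, dot u w; dot v u, dot v v, dot v w; dot w u, dot w v, dot w w]

/-- Determinant of the 4×4 matrix with columns a, b, c, d. -/
def det4 (a b c d : R4) : ℝ := Matrix.det (Matrix.of fun i j => ![a, b, c, d] j i)

/-- Smooth compactly supported test functions on ℝ³. -/
def IsTestFun {E : Type*} [NormedAddCommGroup E] [NormedSpace ℝ E] (ψ : R3 → E) : Prop :=
  ContDiff ℝ (⊤ : ℕ∞) ψ ∧ HasCompactSupport ψ

/-- A weakly differentiable map φ : ℝ³ → S³ ⊂ ℝ⁴ together with its weak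
partial derivatives `pderiv i = ∂ᵢφ`. -/
structure SkyrmeMap where
  toFun : R3 → R4
  pderiv : Fin 3 → R3 → R4
  meas : Measurable toFun
  pderiv_locInt : ∀ i, LocallyIntegrable (pderiv i) volume
  sphere : ∀ᵐ x : R3, nsq (toFun x) = 1
  weak : ∀ (i : Fin 3) (a : Fin 4) (ψ : R3 → ℝ), IsTestFun ψ →
    ∫ x : R3, fderiv ℝ ψ x (Pi.single i 1) * toFun x a
      = - ∫ x : R3, ψ x * pderiv i x a

/-- |∇φ|² = Σᵢ |∂ᵢφ|². -/
def gradSq (φ : SkyrmeMap) (x : R3) : ℝ := ∑ i, nsq (φ.pderiv i x)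

/-- |A(φ)|² = Σᵢⱼ |∂ᵢφ∧∂ⱼφ|². -/
def ASq (φ : SkyrmeMap) (x : R3) : ℝ := ∑ i, ∑ j, wedgeSq (φ.pderiv i x) (φ.pderiv j x)

/-- The Skyrme energy density |∇φ|² + |A(φ)|². -/
def energyDensity (φ : SkyrmeMap) (x : R3) : ℝ := gradSq φ x + ASq φ x

/-- φ ∈ X : finite Skyrme energy. -/
def memX (φ : SkyrmeMap) : Prop := Integrable (energyDensity φ) volume

/-- The Skyrme energy ℰ(φ). -/
def energy (φ : SkyrmeMap) : ℝ := ∫ x, energyDensity φ x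

/-- det(φ, ∇φ)(x). -/
def detDen (φ : SkyrmeMap) (x : R3) : ℝ :=
  det4 (φ.toFun x) (φ.pderiv 0 x) (φ.pderiv 1 x) (φ.pderiv 2 x)

/-- The topological degree d(φ) = (1/(2π²)) ∫ det(φ,∇φ). -/
def degree (φ : SkyrmeMap) : ℝ := (1 / (2 * π ^ 2)) * ∫ x, detDen φ x

/-- I_k = inf of the energy over maps of degree k. -/
def Skyrme.I (k : ℤ) : ℝ :=
  sInf {E : ℝ | ∃ φ : SkyrmeMap, memX φ ∧ degree φ = (k : ℝ) ∧ energy φ = E}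

/-- The north pole P = (0,0,0,1) of S³. -/
def northPole : R4 := ![0, 0, 0, 1]

/-- The Euclidean ball B(y,r) in ℝ³. -/
def eball (y : R3) (r : ℝ) : Set R3 := {x | ∑ i, (x i - y i) ^ 2 < r ^ 2}

/-!
On the sphere, `det(φ, ∇φ) φ₄ = -det(∇φ₁, ∇φ₂, ∇φ₃)`, and the right-hand side is a null Lagrangian
with zero integral. Hence `2π² d(φ) = ∫ (1 - φ₄) det(φ, ∇φ)`, where the weight
`1 - φ₄ = |φ - P|² / 2` is small except where `f` carries mass. Since `∂ᵢφ₄ ∈ L²` and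
`|det(φ, ∇φ)|⁴ ≤ |A(φ)|⁶`, Young's inequality shows that translating the weight by `|v| ≤ λ²`
changes the integral by at most `2λ ∫ f`. Averaging over `v` replaces the weight by its mean over a
ball of radius `λ²`, which is at most `λ` plus a multiple of the mass of `f` in that ball; if `f`
vanishes, then `|d(φ)| < |k|` once `λ` is small.
-/

/-! ### Mollification in `L^p` -/

section Minkowski

variable {α S V : Type*} [MeasurableSpace α] [MeasurableSpace S]
  [NormedAddCommGroup V] [NormedSpace ℝ V] {μ : Measure α} {ν : Measure S}

theorem eLpNorm_integral_le_of_ae_eLpNorm_le [SFinite μ] [IsProbabilityMeasure ν]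
    {p : ℝ≥0∞} (hp : 1 ≤ p) (hp' : p ≠ ∞) {h : α → S → V}
    (hh : AEStronglyMeasurable (Function.uncurry h) (μ.prod ν)) {ε : ℝ≥0∞}
    (hε : ∀ᵐ t ∂ν, eLpNorm (fun x => h x t) p μ ≤ ε) :
    eLpNorm (fun x => ∫ t, h x t ∂ν) p μ ≤ ε := by
  lift p to NNReal using hp'
  have hp0 : p ≠ 0 := by rintro rfl; simp at hp
  have jensen : ∀ᵐ x ∂μ, ‖∫ t, h x t ∂ν‖ₑ ^ (p : ℝ) ≤ ∫⁻ t, ‖h x t‖ₑ ^ (p : ℝ) ∂ν := by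
    filter_upwards [hh.prodMk_left] with x hx
    rw [← eLpNorm_nnreal_pow_eq_lintegral (μ := ν) (f := h x) hp0]
    gcongr
    calc ‖∫ t, h x t ∂ν‖ₑ ≤ eLpNorm (h x) 1 ν := by
          rw [eLpNorm_one_eq_lintegral_enorm]; exact enorm_integral_le_lintegral_enorm _
      _ ≤ eLpNorm (h x) p ν := eLpNorm_le_eLpNorm_of_exponent_le hp hx
  refine (ENNReal.rpow_le_rpow_iff (NNReal.coe_pos.2 hp0.bot_lt)).1 ?_
  calc eLpNorm (fun x => ∫ t, h x t ∂ν) p μ ^ (p : ℝ)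
      ≤ ∫⁻ x, ∫⁻ t, ‖h x t‖ₑ ^ (p : ℝ) ∂ν ∂μ := by
        rw [eLpNorm_nnreal_pow_eq_lintegral hp0]
        exact lintegral_mono_ae jensen
    _ = ∫⁻ t, ∫⁻ x, ‖h x t‖ₑ ^ (p : ℝ) ∂μ ∂ν :=
        lintegral_lintegral_swap (hh.enorm.pow_const _)
    _ ≤ ∫⁻ _, ε ^ (p : ℝ) ∂ν := by
        refine lintegral_mono_ae (hε.mono fun t ht => ?_)
        rw [← eLpNorm_nnreal_pow_eq_lintegral hp0]
        gcongr
    _ = ε ^ (p : ℝ) := by simp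

end Minkowski

section Translation

variable {E V : Type*} [NormedAddCommGroup E] [NormedSpace ℝ E] [FiniteDimensional ℝ E]
  [MeasurableSpace E] [BorelSpace E] {μ : Measure E} [μ.IsAddHaarMeasure] [NormedAddCommGroup V]

theorem tendsto_eLpNorm_translate_sub {p : ℝ≥0∞} (hp : 1 ≤ p) (hp' : p ≠ ∞)
    {f : E → V} (hf : MemLp f p μ) :
    Tendsto (fun t => eLpNorm (fun x => f (x - t) - f x) p μ) (𝓝 0) (𝓝 0) := by
  have : Fact (1 ≤ p) := ⟨hp⟩
  let shift : C(E, C(E, E)) := (ContinuousMap.mk (fun a : E × E => a.2 - a.1)).curry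
  have hshift (t : E) : MeasurePreserving (shift t) μ μ := measurePreserving_sub_right μ t
  have hcont : Continuous fun t => Lp.compMeasurePreserving (shift t) (hshift t) (hf.toLp f) :=
    continuous_const.compMeasurePreservingLp shift.continuous hshift hp'
  have hcoe (t : E) :
      Lp.compMeasurePreserving (shift t) (hshift t) (hf.toLp f) =ᵐ[μ] fun x => f (x - t) := by
    rw [Lp.toLp_compMeasurePreserving hf (hshift t)]
    exact MemLp.coeFn_toLp _
  refine (tendsto_iff_edist_tendsto_0.1 (hcont.tendsto 0)).congr fun t => ?_
  rw [Lp.edist_def]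
  refine eLpNorm_congr_ae ?_
  filter_upwards [hcoe t, hcoe 0] with x ht h0
  rw [Pi.sub_apply, ht, h0, sub_zero]

theorem locallyIntegrable_comp_sub_left {f : E → V} (hf : LocallyIntegrable f μ)
    (x : E) : LocallyIntegrable (fun t => f (x - t)) μ := by
  rw [locallyIntegrable_iff]
  intro K hK
  have hK' := hf.integrableOn_isCompact (hK.image (by fun_prop : Continuous (x - ·)))
  refine (((μ.measurePreserving_sub_left x).integrableOn_comp_preimage
    (Homeomorph.subLeft x).measurableEmbedding).2 hK').mono_set ?_
  exact Set.subset_preimage_image _ _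

variable [NormedSpace ℝ V]

theorem tendsto_eLpNorm_integral_translate_sub {ι : Type*} {l : Filter ι}
    {ν : ι → Measure E} [∀ i, IsProbabilityMeasure (ν i)]
    (hν : ∀ U ∈ 𝓝 (0 : E), ∀ᶠ i in l, ∀ᵐ t ∂ν i, t ∈ U)
    {p : ℝ≥0∞} (hp : 1 ≤ p) (hp' : p ≠ ∞) {f : E → V} (hf : MemLp f p μ) :
    Tendsto (fun i => eLpNorm (fun x => ∫ t, (f (x - t) - f x) ∂ν i) p μ) l (𝓝 0) := by
  rw [ENNReal.tendsto_nhds_zero]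
  intro ε hε
  filter_upwards [hν _ (ENNReal.tendsto_nhds_zero.1 (tendsto_eLpNorm_translate_sub hp hp' hf) ε hε)]
    with i hi
  have hmeas : AEStronglyMeasurable (fun z : E × E => f (z.1 - z.2) - f z.1) (μ.prod (ν i)) :=
    (hf.1.comp_quasiMeasurePreserving
      (quasiMeasurePreserving_sub_of_right_invariant μ (ν i))).sub hf.1.comp_fst
  exact eLpNorm_integral_le_of_ae_eLpNorm_le (h := fun x t => f (x - t) - f x) hp hp' hmeas hi

end Translation

section BumpMeasure

open ContinuousLinearMap (lsmul)
open scoped Convolution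

variable {E V : Type*} [NormedAddCommGroup E] [NormedSpace ℝ E] [FiniteDimensional ℝ E]
  [MeasurableSpace E] [BorelSpace E] {μ : Measure E} [NormedAddCommGroup V] [NormedSpace ℝ V]

/-- The probability measure whose density with respect to `μ` is the normalised bump `φ`; it turns
convolution against `φ.normed μ` into an average. -/
def bumpMeasure (φ : ContDiffBump (0 : E)) (μ : Measure E) : Measure E :=
  μ.withDensity fun t => ENNReal.ofReal (φ.normed μ t)

theorem measurable_ofReal_normed (φ : ContDiffBump (0 : E)) :
    Measurable fun t => ENNReal.ofReal (φ.normed μ t) :=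
  φ.continuous_normed.measurable.ennreal_ofReal

theorem integral_bumpMeasure (φ : ContDiffBump (0 : E)) (f : E → V) :
    ∫ t, f t ∂bumpMeasure φ μ = ∫ t, φ.normed μ t • f t ∂μ := by
  rw [bumpMeasure, integral_withDensity_eq_integral_toReal_smul (measurable_ofReal_normed φ)
    (ae_of_all _ fun _ => ENNReal.ofReal_lt_top)]
  simp only [ENNReal.toReal_ofReal (φ.nonneg_normed _)]

theorem normed_convolution_eq_integral_bumpMeasure (φ : ContDiffBump (0 : E)) (f : E → V) (x : E) :
    (φ.normed μ ⋆[lsmul ℝ ℝ, μ] f) x = ∫ t, f (x - t) ∂bumpMeasure φ μ :=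
  (integral_bumpMeasure φ fun t => f (x - t)).symm

variable [μ.IsAddHaarMeasure]

instance isProbabilityMeasure_bumpMeasure (φ : ContDiffBump (0 : E)) :
    IsProbabilityMeasure (bumpMeasure φ μ) where
  measure_univ := by
    rw [bumpMeasure, withDensity_apply _ .univ, Measure.restrict_univ,
      ← ofReal_integral_eq_lintegral_ofReal φ.integrable_normed (ae_of_all _ φ.nonneg_normed),
      φ.integral_normed, ENNReal.ofReal_one]

theorem ae_bumpMeasure_mem_ball (φ : ContDiffBump (0 : E)) :
    ∀ᵐ t ∂bumpMeasure φ μ, t ∈ Metric.ball 0 φ.rOut := by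
  rw [bumpMeasure, ae_withDensity_iff (measurable_ofReal_normed φ)]
  refine ae_of_all _ fun t ht => ?_
  rw [← φ.support_normed_eq (μ := μ)]
  rintro h
  simp [h] at ht

theorem integrable_bumpMeasure (φ : ContDiffBump (0 : E)) {f : E → V}
    (hf : LocallyIntegrable f μ) : Integrable f (bumpMeasure φ μ) := by
  rw [bumpMeasure, integrable_withDensity_iff_integrable_smul' (measurable_ofReal_normed φ)
    (ae_of_all _ fun _ => ENNReal.ofReal_lt_top)]
  simp only [ENNReal.toReal_ofReal (φ.nonneg_normed _)]
  exact hf.integrable_smul_left_of_hasCompactSupport φ.continuous_normed φ.hasCompactSupport_normed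

theorem tendsto_eLpNorm_normed_convolution_sub [CompleteSpace V] {ι : Type*} {l : Filter ι}
    {φ : ι → ContDiffBump (0 : E)} (hφ : Tendsto (fun i => (φ i).rOut) l (𝓝 0))
    {p : ℝ≥0∞} (hp : 1 ≤ p) (hp' : p ≠ ∞) {f : E → V} (hf : MemLp f p μ) :
    Tendsto (fun i => eLpNorm (fun x => ((φ i).normed μ ⋆[lsmul ℝ ℝ, μ] f) x - f x) p μ)
      l (𝓝 0) := by
  have hball : ∀ U ∈ 𝓝 (0 : E), ∀ᶠ i in l, ∀ᵐ t ∂bumpMeasure (φ i) μ, t ∈ U := by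
    intro U hU
    obtain ⟨δ, hδ, hδU⟩ := Metric.mem_nhds_iff.1 hU
    filter_upwards [hφ.eventually_lt_const hδ] with i hi
    exact (ae_bumpMeasure_mem_ball (φ i)).mono fun t ht => hδU (Metric.ball_subset_ball hi.le ht)
  refine (tendsto_eLpNorm_integral_translate_sub hball hp hp' hf).congr fun i => ?_
  congr 1 with x
  rw [normed_convolution_eq_integral_bumpMeasure, integral_sub
    (integrable_bumpMeasure _ (locallyIntegrable_comp_sub_left (hf.locallyIntegrable hp) x))
    (integrable_const _)]
  simp

end BumpMeasure

/-! ### Weak derivatives and weak divergences -/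

section Weak

theorem locallyIntegrable_clm_apply_const {X F G : Type*} [TopologicalSpace X]
    [MeasurableSpace X] {μ : Measure X} [NormedAddCommGroup F] [NormedSpace ℝ F]
    [NormedAddCommGroup G] [NormedSpace ℝ G] {p : X → F →L[ℝ] G}
    (hp : LocallyIntegrable p μ) (v : F) : LocallyIntegrable (fun x => p x v) μ :=
  fun x => let ⟨s, hs, hps⟩ := hp x
    ⟨s, hs, (ContinuousLinearMap.apply ℝ G v).integrable_comp hps⟩

open ContinuousLinearMap (lsmul)
open scoped Convolution

theorem tendsto_integral_clm_apply {α F G ι : Type*} [MeasurableSpace α] {μ : Measure α}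
    [NormedAddCommGroup F] [NormedSpace ℝ F] [NormedAddCommGroup G] [NormedSpace ℝ G]
    {l : Filter ι} {r q : ℝ≥0∞} [r.HolderConjugate q] {P : ι → α → F →L[ℝ] G}
    {p : α → F →L[ℝ] G} {f : α → F} (hP : ∀ i, AEStronglyMeasurable (P i) μ) (hp : MemLp p r μ)
    (hf : MemLp f q μ) (hPp : Tendsto (fun i => eLpNorm (P i - p) r μ) l (𝓝 0)) :
    Tendsto (fun i => ∫ x, P i x (f x) ∂μ) l (𝓝 (∫ x, p x (f x) ∂μ)) := by
  have integrable_apply {Q : α → F →L[ℝ] G} (hQ : MemLp Q r μ) :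
      Integrable (fun x => Q x (f x)) μ :=
    memLp_one_iff_integrable.1 ((ContinuousLinearMap.id ℝ (F →L[ℝ] G)).memLp_of_bilin 1 hQ hf)
  have hbound (i : ι) : eLpNorm (fun x => P i x (f x) - p x (f x)) 1 μ ≤
      eLpNorm (P i - p) r μ * eLpNorm f q μ := by
    simpa using eLpNorm_le_eLpNorm_mul_eLpNorm_of_nnnorm ((hP i).sub hp.1) hf.1
      (fun (Q : F →L[ℝ] G) v => Q v) 1
      (ae_of_all _ fun x => by simpa using (P i x - p x).le_opNNNorm (f x))
  refine tendsto_integral_of_L1' _ (integrable_apply hp).1 ?_ ?_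
  · filter_upwards [hPp.eventually_lt_const ENNReal.zero_lt_top] with i hi
    have hsub : MemLp (P i - p) r μ := ⟨(hP i).sub hp.1, hi⟩
    refine ((integrable_apply hsub).add (integrable_apply hp)).congr (ae_of_all _ fun x => ?_)
    simp
  · refine tendsto_of_tendsto_of_tendsto_of_le_of_le tendsto_const_nhds ?_
      (fun _ => zero_le) hbound
    simpa using ENNReal.Tendsto.mul_const hPp (.inr hf.2.ne)

/-- A standard mollifying sequence of bumps shrinking to the origin. -/
def mollifier (E : Type*) [NormedAddCommGroup E] [NormedSpace ℝ E] (m : ℕ) :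
    ContDiffBump (0 : E) where
  rIn := 1 / (m + 1) / 2
  rOut := 1 / (m + 1)
  rIn_pos := by positivity
  rIn_lt_rOut := half_lt_self (by positivity)

theorem tendsto_rOut_mollifier (E : Type*) [NormedAddCommGroup E] [NormedSpace ℝ E] :
    Tendsto (fun m => (mollifier E m).rOut) atTop (𝓝 0) :=
  tendsto_one_div_add_atTop_nhds_zero_nat

variable {E : Type*} [NormedAddCommGroup E] [NormedSpace ℝ E] [MeasurableSpace E]

/-- The vector field `F` has weak divergence `d`: both are locally integrable and `d` is minus the
formal adjoint of differentiation applied to `F`. -/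
structure HasWeakDiv (F : E → E) (d : E → ℝ) (μ : Measure E) : Prop where
  locallyIntegrable_field : LocallyIntegrable F μ
  locallyIntegrable_div : LocallyIntegrable d μ
  integral_fderiv_apply : ∀ ψ : E → ℝ, ContDiff ℝ (⊤ : ℕ∞) ψ → HasCompactSupport ψ →
    ∫ x, fderiv ℝ ψ x (F x) ∂μ = -∫ x, ψ x * d x ∂μ

/-- The function `u` is bounded and has the weak derivative `p` in `L^r`. -/
structure BoundedSobolev (u : E → ℝ) (p : E → E →L[ℝ] ℝ) (r : ℝ≥0∞) (μ : Measure E) : Prop where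
  memLp_top : MemLp u ∞ μ
  memLp_fderiv : MemLp p r μ
  integral_fderiv_mul : ∀ ψ : E → ℝ, ContDiff ℝ (⊤ : ℕ∞) ψ → HasCompactSupport ψ → ∀ v : E,
    ∫ x, fderiv ℝ ψ x v * u x ∂μ = -∫ x, ψ x * p x v ∂μ

theorem HasWeakDiv.congr_field {μ : Measure E} {F F' : E → E} {d : E → ℝ}
    (h : HasWeakDiv F d μ) (hF : F =ᵐ[μ] F') :
    HasWeakDiv F' d μ where
  locallyIntegrable_field := h.locallyIntegrable_field.congr hF
  locallyIntegrable_div := h.locallyIntegrable_div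
  integral_fderiv_apply ψ hψ hψc := by
    rw [← h.integral_fderiv_apply ψ hψ hψc]
    exact integral_congr_ae (hF.mono fun x hx => by simp only [hx])

variable [FiniteDimensional ℝ E] {μ : Measure E} [μ.IsAddHaarMeasure]
  {u : E → ℝ} {p : E → E →L[ℝ] ℝ} {r : ℝ≥0∞}

theorem BoundedSobolev.locallyIntegrable (h : BoundedSobolev u p r μ) : LocallyIntegrable u μ :=
  h.memLp_top.locallyIntegrable le_top

theorem BoundedSobolev.locallyIntegrable_fderiv (h : BoundedSobolev u p r μ) (hr : 1 ≤ r) :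
    LocallyIntegrable p μ :=
  h.memLp_fderiv.locallyIntegrable hr

theorem BoundedSobolev.hasWeakDiv_smul_const (h : BoundedSobolev u p r μ) (hr : 1 ≤ r) (v : E) :
    HasWeakDiv (fun x => u x • v) (fun x => p x v) μ where
  locallyIntegrable_field x := let ⟨s, hs, hus⟩ := h.locallyIntegrable x
    ⟨s, hs, hus.smul_const v⟩
  locallyIntegrable_div := locallyIntegrable_clm_apply_const (h.locallyIntegrable_fderiv hr) v
  integral_fderiv_apply ψ hψ hψc := by
    rw [← h.integral_fderiv_mul ψ hψ hψc v]
    simp only [map_smul, smul_eq_mul, mul_comm]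

variable [BorelSpace E]

theorem BoundedSobolev.fderiv_normed_convolution (h : BoundedSobolev u p r μ) (hr : 1 ≤ r)
    (φ : ContDiffBump (0 : E)) (x : E) :
    fderiv ℝ (φ.normed μ ⋆[lsmul ℝ ℝ, μ] u) x = (φ.normed μ ⋆[lsmul ℝ ℝ, μ] p) x := by
  have hφ : ContDiff ℝ (⊤ : ℕ∞) (φ.normed μ) := φ.contDiff_normed
  have hφc : HasCompactSupport (φ.normed μ) := φ.hasCompactSupport_normed
  rw [(hφc.hasFDerivAt_convolution_left _ (hφ.of_le (by simp)) h.locallyIntegrable x).fderiv]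
  ext v
  have hfderiv (t : E) :
      fderiv ℝ (fun t => φ.normed μ (x - t)) t v = -fderiv ℝ (φ.normed μ) (x - t) v := by
    have hd := (hφ.differentiable (by simp) (x - t)).hasFDerivAt.comp t
      ((hasFDerivAt_id t).const_sub x)
    change fderiv ℝ (φ.normed μ ∘ HSub.hSub x) t v = _
    rw [hd.fderiv]; simp
  have hweak := h.integral_fderiv_mul (fun t => φ.normed μ (x - t)) (by fun_prop)
    (hφc.comp_homeomorph (Homeomorph.subLeft x)) v
  simp only [hfderiv, neg_mul, integral_neg, neg_inj] at hweak
  calc (fderiv ℝ (φ.normed μ) ⋆[(lsmul ℝ ℝ).precompL E, μ] u) x v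
      = ∫ t, fderiv ℝ (φ.normed μ) t v * u (x - t) ∂μ := by
        rw [convolution_def, ContinuousLinearMap.integral_apply]
        · rfl
        · exact (hφc.fderiv ℝ).convolutionExists_left _ (hφ.continuous_fderiv (by simp))
            h.locallyIntegrable x
    _ = ∫ t, fderiv ℝ (φ.normed μ) (x - t) v * u t ∂μ := by
        rw [← integral_sub_left_eq_self _ μ x]; simp
    _ = ∫ t, φ.normed μ (x - t) * p t v ∂μ := hweak
    _ = ∫ t, φ.normed μ t * p (x - t) v ∂μ := by
        rw [← integral_sub_left_eq_self _ μ x]; simp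
    _ = (φ.normed μ ⋆[lsmul ℝ ℝ, μ] p) x v := by
        rw [convolution_def, ContinuousLinearMap.integral_apply]
        · rfl
        · exact hφc.convolutionExists_left _ hφ.continuous (h.locallyIntegrable_fderiv hr) x

theorem norm_normed_convolution_le {C : ℝ} (hu : ∀ᵐ x ∂μ, ‖u x‖ ≤ C) (φ : ContDiffBump (0 : E))
    (x : E) : ‖(φ.normed μ ⋆[lsmul ℝ ℝ, μ] u) x‖ ≤ C := by
  have hshift : ∀ᵐ t ∂bumpMeasure φ μ, ‖u (x - t)‖ ≤ C :=
    (withDensity_absolutelyContinuous _ _).ae_le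
      ((μ.measurePreserving_sub_left x).quasiMeasurePreserving.ae hu)
  rw [normed_convolution_eq_integral_bumpMeasure]
  simpa using norm_integral_le_of_norm_le_const hshift

theorem BoundedSobolev.exists_smooth_approx (h : BoundedSobolev u p r μ) (hr : 1 ≤ r)
    (hr' : r ≠ ∞) :
    ∃ (g : ℕ → E → ℝ) (C : ℝ), (∀ m, ContDiff ℝ (⊤ : ℕ∞) (g m)) ∧ (∀ m x, ‖g m x‖ ≤ C) ∧
      (∀ᵐ x ∂μ, Tendsto (fun m => g m x) atTop (𝓝 (u x))) ∧
      Tendsto (fun m => eLpNorm (fderiv ℝ (g m) - p) r μ) atTop (𝓝 0) := by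
  refine ⟨fun m => (mollifier E m).normed μ ⋆[lsmul ℝ ℝ, μ] u, lpNorm u ∞ μ, fun m => ?_,
    fun m => norm_normed_convolution_le (ae_le_lpNorm_exponent_top h.memLp_top) _, ?_, ?_⟩
  · exact (mollifier E m).hasCompactSupport_normed.contDiff_convolution_left _
      (mollifier E m).contDiff_normed h.locallyIntegrable
  · refine ContDiffBump.ae_convolution_tendsto_right_of_locallyIntegrable (K := 2)
      (tendsto_rOut_mollifier E) (Eventually.of_forall fun m => ?_) h.locallyIntegrable
    exact (mul_div_cancel₀ _ two_ne_zero).ge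
  · simp only [funext (h.fderiv_normed_convolution hr _)]
    exact tendsto_eLpNorm_normed_convolution_sub (tendsto_rOut_mollifier E) hr hr' h.memLp_fderiv

end Weak

section ProductRule

variable {E : Type*} [NormedAddCommGroup E] [NormedSpace ℝ E]
  [MeasurableSpace E] [BorelSpace E] {μ : Measure E} {u d : E → ℝ} {F : E → E}
  {p : E → E →L[ℝ] ℝ} {r q : ℝ≥0∞}

theorem locallyIntegrable_smul_of_memLp_top {X V : Type*} [TopologicalSpace X] [MeasurableSpace X]
    {μ : Measure X} [NormedAddCommGroup V] [NormedSpace ℝ V] {u : X → ℝ} {F : X → V}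
    (hu : MemLp u ∞ μ) (hF : LocallyIntegrable F μ) :
    LocallyIntegrable (fun x => u x • F x) μ :=
  fun x => let ⟨s, hs, hFs⟩ := hF x
    ⟨s, hs, Integrable.smul_of_top_right hFs (hu.restrict s)⟩

theorem tendsto_integral_mul_of_bounded {α : Type*} [MeasurableSpace α] {μ : Measure α}
    {g : ℕ → α → ℝ} {u w : α → ℝ} {C : ℝ} (hg : ∀ m, AEStronglyMeasurable (g m) μ)
    (hgC : ∀ m x, ‖g m x‖ ≤ C) (hgu : ∀ᵐ x ∂μ, Tendsto (fun m => g m x) atTop (𝓝 (u x)))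
    (hw : Integrable w μ) :
    Tendsto (fun m => ∫ x, g m x * w x ∂μ) atTop (𝓝 (∫ x, u x * w x ∂μ)) := by
  refine tendsto_integral_of_dominated_convergence (fun x => C * ‖w x‖)
    (fun m => (hg m).mul hw.1) (hw.norm.const_mul C) (fun m => ae_of_all _ fun x => ?_)
    (hgu.mono fun x hx => hx.mul_const (w x))
  rw [norm_mul]
  gcongr
  exact hgC m x

theorem integrable_clm_apply_of_hasCompactSupport {X F G : Type*} [TopologicalSpace X] [T2Space X]
    [MeasurableSpace X] [OpensMeasurableSpace X] {μ : Measure X}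
    [NormedAddCommGroup F] [NormedSpace ℝ F] [NormedAddCommGroup G] [NormedSpace ℝ G]
    {L : X → F →L[ℝ] G} {f : X → F} (hL : Continuous L) (hLc : HasCompactSupport L)
    (hf : LocallyIntegrable f μ) : Integrable (fun x => L x (f x)) μ := by
  have hL' : MemLp L ∞ (μ.restrict (tsupport L)) :=
    hL.memLp_top_of_hasCompactSupport hLc _
  have hf' : MemLp f 1 (μ.restrict (tsupport L)) :=
    memLp_one_iff_integrable.2 (hf.integrableOn_isCompact hLc)
  have hsupp : Function.support (fun x => L x (f x)) ⊆ tsupport L := fun x hx =>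
    subset_tsupport L fun h => hx (by simp [h])
  rw [← integrableOn_iff_integrable_of_support_subset hsupp]
  exact memLp_one_iff_integrable.1 ((ContinuousLinearMap.id ℝ _).memLp_of_bilin 1 hL' hf')

theorem HasWeakDiv.integrable_fderiv_apply (hF : HasWeakDiv F d μ) {ψ : E → ℝ}
    (hψ : ContDiff ℝ (⊤ : ℕ∞) ψ) (hψc : HasCompactSupport ψ) :
    Integrable (fun x => fderiv ℝ ψ x (F x)) μ :=
  integrable_clm_apply_of_hasCompactSupport (hψ.continuous_fderiv (by simp)) (hψc.fderiv ℝ)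
    hF.locallyIntegrable_field

theorem HasWeakDiv.sum {ι : Type*} (s : Finset ι) {F : ι → E → E} {d : ι → E → ℝ}
    (h : ∀ i ∈ s, HasWeakDiv (F i) (d i) μ) :
    HasWeakDiv (∑ i ∈ s, F i) (∑ i ∈ s, d i) μ where
  locallyIntegrable_field := locallyIntegrable_finsetSum' s fun i hi =>
    (h i hi).locallyIntegrable_field
  locallyIntegrable_div := locallyIntegrable_finsetSum' s fun i hi =>
    (h i hi).locallyIntegrable_div
  integral_fderiv_apply ψ hψ hψc := by
    have hd (i : ι) (hi : i ∈ s) : Integrable (fun x => ψ x * d i x) μ :=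
      (h i hi).locallyIntegrable_div.integrable_smul_left_of_hasCompactSupport hψ.continuous hψc
    simp only [Finset.sum_apply, map_sum, Finset.mul_sum]
    rw [integral_finsetSum _ fun i hi => (h i hi).integrable_fderiv_apply hψ hψc,
      integral_finsetSum _ hd, ← Finset.sum_neg_distrib]
    exact Finset.sum_congr rfl fun i hi => (h i hi).integral_fderiv_apply ψ hψ hψc

theorem HasWeakDiv.integral_mul_smooth (hF : HasWeakDiv F d μ) {g ψ : E → ℝ}
    (hg : ContDiff ℝ (⊤ : ℕ∞) g) {C : ℝ} (hgC : ∀ x, ‖g x‖ ≤ C) (hψ : ContDiff ℝ (⊤ : ℕ∞) ψ)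
    (hψc : HasCompactSupport ψ) :
    ∫ x, g x * fderiv ℝ ψ x (F x) ∂μ + ∫ x, fderiv ℝ g x (ψ x • F x) ∂μ =
      -∫ x, g x * (ψ x * d x) ∂μ := by
  have hfderiv (x : E) : fderiv ℝ (fun x => g x * ψ x) x (F x) =
      g x * fderiv ℝ ψ x (F x) + fderiv ℝ g x (ψ x • F x) := by
    rw [fderiv_fun_mul (hg.differentiable (by simp) x) (hψ.differentiable (by simp) x)]
    simp
  have hint₁ : Integrable (fun x => g x * fderiv ℝ ψ x (F x)) μ :=
    (hF.integrable_fderiv_apply hψ hψc).bdd_mul hg.continuous.aestronglyMeasurable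
      (ae_of_all _ hgC)
  have hint₂ : Integrable (fun x => fderiv ℝ g x (ψ x • F x)) μ :=
    ((hF.integrable_fderiv_apply (hg.mul hψ) hψc.mul_left).sub hint₁).congr
      (ae_of_all _ fun x => by simp [hfderiv])
  rw [← integral_add hint₁ hint₂]
  simpa only [hfderiv, mul_assoc] using
    hF.integral_fderiv_apply (fun x => g x * ψ x) (hg.mul hψ) hψc.mul_left

theorem locallyIntegrable_clm_apply {X V : Type*} [TopologicalSpace X] [LocallyCompactSpace X]
    [MeasurableSpace X] {μ : Measure X} [NormedAddCommGroup V] [NormedSpace ℝ V]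
    {P : X → V →L[ℝ] ℝ} {f : X → V} [r.HolderConjugate q] (hP : MemLp P r μ)
    (hf : ∀ K, IsCompact K → MemLp f q (μ.restrict K)) :
    LocallyIntegrable (fun x => P x (f x)) μ :=
  locallyIntegrable_iff.2 fun K hK => memLp_one_iff_integrable.1
    ((ContinuousLinearMap.id ℝ (V →L[ℝ] ℝ)).memLp_of_bilin 1 (hP.restrict K) (hf K hK))

theorem memLp_smul_of_hasCompactSupport {X V : Type*} [TopologicalSpace X]
    [MeasurableSpace X] [BorelSpace X] {μ : Measure X} [NormedAddCommGroup V] [NormedSpace ℝ V]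
    {ψ : X → ℝ} {f : X → V} (hψ : Continuous ψ) (hψc : HasCompactSupport ψ)
    (hf : ∀ K, IsCompact K → MemLp f q (μ.restrict K)) :
    MemLp (fun x => ψ x • f x) q μ := by
  have hψf : MemLp (fun x => ψ x • f x) q (μ.restrict (tsupport ψ)) :=
    (hf _ hψc).smul (hψ.memLp_top_of_hasCompactSupport hψc _)
  rw [← memLp_indicator_iff_restrict (isClosed_tsupport ψ).measurableSet] at hψf
  convert hψf using 1
  refine (Set.indicator_eq_self.2 fun x hx => subset_tsupport ψ fun h => hx ?_).symm
  simp [h]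

variable [FiniteDimensional ℝ E]

theorem HasWeakDiv.ae_eq_zero_of_const [μ.IsAddHaarMeasure] {v : E}
    (h : HasWeakDiv (fun _ => v) d μ) : d =ᵐ[μ] 0 := by
  refine ae_eq_zero_of_integral_contDiff_smul_eq_zero h.locallyIntegrable_div fun ψ hψ hψc => ?_
  have hconst : ∫ x, 1 * fderiv ℝ ψ x v ∂μ = -∫ x, fderiv ℝ (fun _ : E => (1 : ℝ)) x v * ψ x ∂μ :=
    integral_mul_fderiv_eq_neg_fderiv_mul_of_integrable (by simp)
      (by simpa using h.integrable_fderiv_apply hψ hψc)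
      (by simpa using hψ.continuous.integrable_of_hasCompactSupport hψc)
      (fun _ _ => differentiableAt_const _) fun x _ => hψ.differentiable (by simp) x
  have := h.integral_fderiv_apply ψ hψ hψc
  simpa [this] using hconst

theorem HasWeakDiv.integral_div_eq_zero (hF : HasWeakDiv F d μ) (hFi : Integrable F μ)
    (hd : Integrable d μ) : ∫ x, d x ∂μ = 0 := by
  let χ : ContDiffBump (0 : E) := ⟨1, 2, one_pos, one_lt_two⟩
  let η (n : ℕ) (x : E) : ℝ := χ ((1 / ((n : ℝ) + 1)) • x)
  have hη (n : ℕ) : ContDiff ℝ (⊤ : ℕ∞) (η n) := χ.contDiff.comp (contDiff_const_smul _)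
  have hηc (n : ℕ) : HasCompactSupport (η n) :=
    χ.hasCompactSupport.comp_smul (by positivity)
  have hscale (x : E) : Tendsto (fun n : ℕ => (1 / ((n : ℝ) + 1)) • x) atTop (𝓝 0) := by
    simpa using (tendsto_one_div_add_atTop_nhds_zero_nat (𝕜 := ℝ)).smul_const x
  have hηlim (x : E) : Tendsto (fun n => η n x) atTop (𝓝 1) := by
    have := (χ.continuous.tendsto 0).comp (hscale x)
    rwa [χ.one_of_mem_closedBall (Metric.mem_closedBall_self χ.rIn_pos.le)] at this
  obtain ⟨C, hC⟩ : ∃ C, ∀ x, ‖fderiv ℝ χ x‖ ≤ C :=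
    (χ.hasCompactSupport.fderiv ℝ).exists_bound_of_continuous
      ((χ.contDiff (n := 1)).continuous_fderiv (by simp))
  have hfderiv (n : ℕ) (x v : E) : fderiv ℝ (η n) x v =
      (1 / ((n : ℝ) + 1)) * fderiv ℝ χ ((1 / ((n : ℝ) + 1)) • x) v := by
    simp only [η, fderiv_comp_smul]; simp
  have hfield : Tendsto (fun n => ∫ x, fderiv ℝ (η n) x (F x) ∂μ) atTop (𝓝 0) := by
    refine squeeze_zero_norm (a := fun n : ℕ => (1 / ((n : ℝ) + 1)) * (C * ∫ x, ‖F x‖ ∂μ))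
      (fun n => ?_) (by simpa using
        (tendsto_one_div_add_atTop_nhds_zero_nat (𝕜 := ℝ)).mul_const (C * ∫ x, ‖F x‖ ∂μ))
    simp only [hfderiv, integral_const_mul, norm_mul]
    rw [Real.norm_of_nonneg (by positivity), ← integral_const_mul]
    gcongr
    exact norm_integral_le_of_norm_le (hFi.norm.const_mul C)
      (ae_of_all _ fun x => ContinuousLinearMap.le_of_opNorm_le _ (hC _) _)
  have hdiv : Tendsto (fun n => ∫ x, η n x * d x ∂μ) atTop (𝓝 (∫ x, 1 * d x ∂μ)) :=
    tendsto_integral_mul_of_bounded (C := 1) (fun n => (hη n).continuous.aestronglyMeasurable)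
      (fun n x => by rw [Real.norm_of_nonneg χ.nonneg]; exact χ.le_one)
      (ae_of_all _ hηlim) hd
  simp only [fun n => hF.integral_fderiv_apply (η n) (hη n) (hηc n)] at hfield
  simpa using tendsto_nhds_unique hdiv (by simpa using hfield.neg)

variable [μ.IsAddHaarMeasure]

theorem BoundedSobolev.hasWeakDiv_smul [r.HolderConjugate q] (hr : r ≠ ∞)
    (h : BoundedSobolev u p r μ) (hF : HasWeakDiv F d μ)
    (hFq : ∀ K, IsCompact K → MemLp F q (μ.restrict K)) :
    HasWeakDiv (fun x => u x • F x) (fun x => p x (F x) + u x * d x) μ where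
  locallyIntegrable_field := locallyIntegrable_smul_of_memLp_top h.memLp_top
    hF.locallyIntegrable_field
  locallyIntegrable_div := (locallyIntegrable_clm_apply h.memLp_fderiv hFq).add
    (locallyIntegrable_smul_of_memLp_top h.memLp_top hF.locallyIntegrable_div)
  integral_fderiv_apply ψ hψ hψc := by
    obtain ⟨g, C, hg, hgC, hgu, hgp⟩ :=
      h.exists_smooth_approx (ENNReal.HolderConjugate.one_le r q) hr
    have hgm (m : ℕ) : AEStronglyMeasurable (g m) μ := (hg m).continuous.aestronglyMeasurable
    have hψd : Integrable (fun x => ψ x * d x) μ :=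
      hF.locallyIntegrable_div.integrable_smul_left_of_hasCompactSupport hψ.continuous hψc
    have hup := tendsto_integral_mul_of_bounded hgm hgC hgu (hF.integrable_fderiv_apply hψ hψc)
    have hpF := tendsto_integral_clm_apply
      (fun m => ((hg m).continuous_fderiv (by simp)).aestronglyMeasurable) h.memLp_fderiv
      (memLp_smul_of_hasCompactSupport hψ.continuous hψc hFq) hgp
    have hud := tendsto_integral_mul_of_bounded hgm hgC hgu hψd
    have hlim := tendsto_nhds_unique (hup.add hpF) (by
      simpa only [hF.integral_mul_smooth (hg _) (hgC _) hψ hψc] using hud.neg)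
    have hpFint : Integrable (fun x => p x (ψ x • F x)) μ := by
      simpa using (locallyIntegrable_clm_apply h.memLp_fderiv
        hFq).integrable_smul_left_of_hasCompactSupport hψ.continuous hψc
    have hudint : Integrable (fun x => u x * (ψ x * d x)) μ :=
      Integrable.smul_of_top_right hψd h.memLp_top
    calc ∫ x, fderiv ℝ ψ x (u x • F x) ∂μ = ∫ x, u x * fderiv ℝ ψ x (F x) ∂μ := by simp
      _ = -(∫ x, p x (ψ x • F x) ∂μ + ∫ x, u x * (ψ x * d x) ∂μ) := by linarith
      _ = -∫ x, ψ x * (p x (F x) + u x * d x) ∂μ := by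
        rw [← integral_add hpFint hudint]
        simp only [map_smul, smul_eq_mul, mul_add, mul_left_comm]

theorem BoundedSobolev.hasWeakDiv_sq_smul (hr : 1 ≤ r) (hr' : r ≠ ∞) (h : BoundedSobolev u p r μ)
    (v : E) : HasWeakDiv (fun x => u x ^ 2 • v) (fun x => 2 * (u x * p x v)) μ := by
  have : r.HolderConjugate r.conjExponent := .conjExponent hr
  have hF (K : Set E) (hK : IsCompact K) :
      MemLp (fun x => u x • v) r.conjExponent (μ.restrict K) := by
    have : IsFiniteMeasure (μ.restrict K) := isFiniteMeasure_restrict.2 hK.measure_lt_top.ne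
    exact (ContinuousLinearMap.toSpanSingleton ℝ v).comp_memLp'
      ((h.memLp_top.restrict K).mono_exponent le_top)
  convert h.hasWeakDiv_smul hr' (h.hasWeakDiv_smul_const hr v) hF using 2 with x x
  · rw [smul_smul, sq]
  · rw [map_smul, smul_eq_mul]
    ring

theorem BoundedSobolev.sum_mul_fderiv_ae_eq_zero {ι : Type*} [Fintype ι] {u : ι → E → ℝ}
    {p : ι → E → E →L[ℝ] ℝ} (hr : 1 ≤ r) (hr' : r ≠ ∞) (h : ∀ i, BoundedSobolev (u i) (p i) r μ)
    {c : ℝ} (hu : ∀ᵐ x ∂μ, ∑ i, u i x ^ 2 = c) (v : E) :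
    ∀ᵐ x ∂μ, ∑ i, u i x * p i x v = 0 := by
  have hsum := HasWeakDiv.sum Finset.univ fun i _ => (h i).hasWeakDiv_sq_smul hr hr' v
  have hconst : (∑ i, fun x => u i x ^ 2 • v) =ᵐ[μ] fun _ => c • v := hu.mono fun x hx => by
    rw [Finset.sum_apply, ← Finset.sum_smul, hx]
  filter_upwards [(hsum.congr_field hconst).ae_eq_zero_of_const] with x hx
  simpa [← Finset.mul_sum] using hx

end ProductRule

section TranslationEstimate

variable {E : Type*} [NormedAddCommGroup E] [NormedSpace ℝ E] [FiniteDimensional ℝ E]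
  [MeasurableSpace E] [BorelSpace E] {μ : Measure E} [μ.IsAddHaarMeasure]
  {u : E → ℝ} {p : E → E →L[ℝ] ℝ} {r : ℝ≥0∞}

theorem eLpNorm_translate_sub_le_of_contDiff (hr : 1 ≤ r) (hr' : r ≠ ∞) {g : E → ℝ}
    (hg : ContDiff ℝ 1 g) (v : E) :
    eLpNorm (fun x => g (x + v) - g x) r μ ≤ eLpNorm (fun x => fderiv ℝ g x v) r μ := by
  have hfderiv : Continuous fun x => fderiv ℝ g x v := (hg.continuous_fderiv (by simp)).clm_apply
    continuous_const
  have hftc (x : E) : g (x + v) - g x =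
      ∫ t in Set.Ioc (0 : ℝ) 1, fderiv ℝ g (x + t • v) v := by
    have hline (t : ℝ) : HasDerivAt (fun t : ℝ => g (x + t • v)) (fderiv ℝ g (x + t • v) v) t :=
      (hg.differentiable (by simp) _).hasFDerivAt.comp_hasDerivAt t
        (by simpa using ((hasDerivAt_id t).smul_const v).const_add x)
    rw [← intervalIntegral.integral_of_le zero_le_one,
      intervalIntegral.integral_eq_sub_of_hasDerivAt (fun t _ => hline t)
        (Continuous.intervalIntegrable (by fun_prop) _ _)]
    simp
  have : IsProbabilityMeasure (volume.restrict (Set.Ioc (0 : ℝ) 1)) := ⟨by simp⟩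
  simp only [hftc]
  refine eLpNorm_integral_le_of_ae_eLpNorm_le hr hr' (h := fun x t => fderiv ℝ g (x + t • v) v)
    (Continuous.aestronglyMeasurable (by fun_prop)) (ae_of_all _ fun t => ?_)
  exact (eLpNorm_comp_measurePreserving (g := fun x => fderiv ℝ g x v)
    hfderiv.aestronglyMeasurable (measurePreserving_add_right μ (t • v))).le

theorem BoundedSobolev.eLpNorm_translate_sub_le (hr : 1 ≤ r) (hr' : r ≠ ∞)
    (h : BoundedSobolev u p r μ) (v : E) :
    eLpNorm (fun x => u (x + v) - u x) r μ ≤ eLpNorm (fun x => p x v) r μ := by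
  obtain ⟨g, C, hg, -, hgu, hgp⟩ := h.exists_smooth_approx hr hr'
  have hlim : ∀ᵐ x ∂μ, Tendsto (fun m => g m (x + v) - g m x) atTop (𝓝 (u (x + v) - u x)) := by
    filter_upwards [hgu,
      (measurePreserving_add_right μ v).quasiMeasurePreserving.ae hgu] with x hx hxv
    exact hxv.sub hx
  have hpv : AEStronglyMeasurable (fun x => p x v) μ :=
    (ContinuousLinearMap.apply ℝ ℝ v).continuous.comp_aestronglyMeasurable h.memLp_fderiv.1
  have hsmooth (m : ℕ) : eLpNorm (fun x => g m (x + v) - g m x) r μ ≤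
      ENNReal.ofReal ‖v‖ * eLpNorm (fderiv ℝ (g m) - p) r μ + eLpNorm (fun x => p x v) r μ := by
    have hgv : Continuous fun x => fderiv ℝ (g m) x v :=
      ((hg m).continuous_fderiv (by simp)).clm_apply continuous_const
    refine (eLpNorm_translate_sub_le_of_contDiff hr hr' ((hg m).of_le (by simp)) v).trans ?_
    have hsplit : (fun x => fderiv ℝ (g m) x v) =
        (fun x => (fderiv ℝ (g m) - p) x v) + fun x => p x v := by ext x; simp
    have hdiff : AEStronglyMeasurable (fun x => (fderiv ℝ (g m) - p) x v) μ :=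
      hgv.aestronglyMeasurable.sub hpv
    rw [hsplit]
    refine (eLpNorm_add_le hdiff hpv hr).trans ?_
    gcongr
    refine eLpNorm_le_mul_eLpNorm_of_ae_le_mul (ae_of_all _ fun x => ?_) r
    rw [mul_comm]
    exact ContinuousLinearMap.le_opNorm _ v
  refine (Lp.eLpNorm_lim_le_liminf_eLpNorm (fun m => ?_) _ hlim).trans ?_
  · exact (((hg m).continuous.comp (continuous_add_const v)).sub
      (hg m).continuous).aestronglyMeasurable
  · refine (liminf_le_liminf (Eventually.of_forall hsmooth)).trans_eq (Tendsto.liminf_eq ?_)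
    have hmul := ENNReal.Tendsto.const_mul hgp (.inr (ENNReal.ofReal_ne_top (r := ‖v‖)))
    rw [mul_zero] at hmul
    simpa only [zero_add] using hmul.add_const (eLpNorm (fun x => p x v) r μ)

theorem BoundedSobolev.memLp_translate_sub (hr : 1 ≤ r) (hr' : r ≠ ∞) (h : BoundedSobolev u p r μ)
    (v : E) : MemLp (fun x => u (x + v) - u x) r μ := by
  refine ⟨?_, (h.eLpNorm_translate_sub_le hr hr' v).trans_lt ?_⟩
  · exact (h.memLp_top.1.comp_measurePreserving (measurePreserving_add_right μ v)).sub
      h.memLp_top.1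
  · exact ((ContinuousLinearMap.apply ℝ ℝ v).comp_memLp' h.memLp_fderiv).2

theorem BoundedSobolev.integral_sq_translate_sub_le (h : BoundedSobolev u p 2 μ) (v : E) :
    ∫ x, (u (x + v) - u x) ^ 2 ∂μ ≤ ∫ x, p x v ^ 2 ∂μ := by
  have hle := h.eLpNorm_translate_sub_le one_le_two (by simp) v
  have hpv : MemLp (fun x => p x v) 2 μ :=
    (ContinuousLinearMap.apply ℝ ℝ v).comp_memLp' h.memLp_fderiv
  rw [(h.memLp_translate_sub one_le_two (by simp) v).eLpNorm_eq_integral_rpow_norm (by simp)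
    (by simp), hpv.eLpNorm_eq_integral_rpow_norm (by simp) (by simp),
    ENNReal.ofReal_le_ofReal_iff (by positivity),
    Real.rpow_le_rpow_iff (by positivity) (by positivity) (by simp)] at hle
  simpa using hle

end TranslationEstimate

/-! ### The Jacobian as a null Lagrangian -/

section NullLagrangian

open scoped Matrix

theorem BoundedSobolev.integral_apply_eq_zero {E : Type*} [NormedAddCommGroup E] [NormedSpace ℝ E]
    [FiniteDimensional ℝ E] [MeasurableSpace E] [BorelSpace E] {μ : Measure E} [μ.IsAddHaarMeasure]
    {u : E → ℝ} {p : E → E →L[ℝ] ℝ} {F : E → E} {r q : ℝ≥0∞} [r.HolderConjugate q] (hr : r ≠ ∞)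
    (h : BoundedSobolev u p r μ) (hF : HasWeakDiv F 0 μ) (hFi : Integrable F μ)
    (hFq : MemLp F q μ) : ∫ x, p x (F x) ∂μ = 0 := by
  have hpF : Integrable (fun x => p x (F x)) μ := memLp_one_iff_integrable.1
    ((ContinuousLinearMap.id ℝ (E →L[ℝ] ℝ)).memLp_of_bilin 1 h.memLp_fderiv hFq)
  have huF := h.hasWeakDiv_smul hr hF fun K _ => hFq.restrict K
  simpa using huF.integral_div_eq_zero (hFi.smul_of_top_right h.memLp_top) (by simpa using hpF)

theorem BoundedSobolev.integral_apply_of_contDiff {ι : Type*} [Fintype ι] [DecidableEq ι]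
    {u : (ι → ℝ) → ℝ} {p : (ι → ℝ) → (ι → ℝ) →L[ℝ] ℝ} {r : ℝ≥0∞} (hr : 1 ≤ r)
    (h : BoundedSobolev u p r volume) {G : (ι → ℝ) → ι → ℝ} (hG : ContDiff ℝ (⊤ : ℕ∞) G)
    (hGc : HasCompactSupport G) :
    ∫ x, p x (G x) = -∫ x, (∑ i, fderiv ℝ (fun y => G y i) x (Pi.single i 1)) * u x := by
  have hGi (i : ι) : ContDiff ℝ (⊤ : ℕ∞) fun x => G x i := contDiff_pi.1 hG i
  have hGic (i : ι) : HasCompactSupport fun x => G x i :=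
    hGc.comp_left (g := fun v : ι → ℝ => v i) rfl
  have hint₁ (i : ι) : Integrable fun x => G x i * p x (Pi.single i 1) :=
    (locallyIntegrable_clm_apply_const (h.locallyIntegrable_fderiv hr)
      _).integrable_smul_left_of_hasCompactSupport (hGi i).continuous (hGic i)
  have hint₂ (i : ι) : Integrable fun x => fderiv ℝ (fun y => G y i) x (Pi.single i 1) * u x :=
    h.locallyIntegrable.integrable_smul_left_of_hasCompactSupport
      (((hGi i).continuous_fderiv (by simp)).clm_apply continuous_const)
      ((hGic i).fderiv_apply ℝ _)
  calc ∫ x, p x (G x) = ∫ x, ∑ i, G x i * p x (Pi.single i 1) := by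
        congr! 2 with x
        conv_lhs => rw [pi_eq_sum_univ' (G x)]
        simp [map_sum]
    _ = ∑ i, ∫ x, G x i * p x (Pi.single i 1) := integral_finsetSum _ fun i _ => hint₁ i
    _ = -∑ i, ∫ x, fderiv ℝ (fun y => G y i) x (Pi.single i 1) * u x := by
        simp only [fun i => h.integral_fderiv_mul _ (hGi i) (hGic i), Finset.sum_neg_distrib,
          neg_neg]
    _ = _ := by
        rw [← integral_finsetSum _ fun i _ => hint₂ i]
        simp only [Finset.sum_mul]

/-- The vector of coordinates of a linear form, which represents it for the dot product; applied to
a derivative, it gives the gradient. -/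
def coordVec (ι : Type*) [Fintype ι] [DecidableEq ι] : ((ι → ℝ) →L[ℝ] ℝ) →L[ℝ] ι → ℝ :=
  ContinuousLinearMap.pi fun i => ContinuousLinearMap.apply ℝ ℝ (Pi.single i 1)

theorem clm_apply_eq_coordVec_dotProduct {ι : Type*} [Fintype ι] [DecidableEq ι]
    (L : (ι → ℝ) →L[ℝ] ℝ) (v : ι → ℝ) : L v = coordVec ι L ⬝ᵥ v := by
  conv_lhs => rw [pi_eq_sum_univ' v]
  simp [coordVec, dotProduct, map_sum, mul_comm]

/-- The cross product of two linear forms on `ℝ³`, as a continuous bilinear map. -/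
def formCross : (R3 →L[ℝ] ℝ) →L[ℝ] (R3 →L[ℝ] ℝ) →L[ℝ] R3 :=
  ((crossProduct (R := ℝ)).compl₁₂ (coordVec (Fin 3)).toLinearMap
    (coordVec (Fin 3)).toLinearMap).toContinuousBilinearMap

theorem formCross_apply (L M : R3 →L[ℝ] ℝ) :
    formCross L M = coordVec (Fin 3) L ⨯₃ coordVec (Fin 3) M := rfl

theorem apply_formCross_rotate (K L M : R3 →L[ℝ] ℝ) : K (formCross L M) = L (formCross M K) := by
  simp only [clm_apply_eq_coordVec_dotProduct, formCross_apply]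
  exact triple_product_permutation _ _ _

theorem sum_fderiv_formCross_fderiv {η ψ : R3 → ℝ} (hη : ContDiff ℝ 2 η) (hψ : ContDiff ℝ 2 ψ)
    (x : R3) : ∑ i, fderiv ℝ (fun y => formCross (fderiv ℝ η y) (fderiv ℝ ψ y) i) x
      (Pi.single i 1) = 0 := by
  have hdiff {f : R3 → ℝ} (hf : ContDiff ℝ 2 f) (v : R3) :
      DifferentiableAt ℝ (fun y => fderiv ℝ f y v) x :=
    (((hf.fderiv_right (m := 1) (by norm_num)).differentiable (by simp)).clm_apply
      (differentiable_const v)) x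
  have hsymm {f : R3 → ℝ} (hf : ContDiff ℝ 2 f) (v w : R3) :
      fderiv ℝ (fun y => fderiv ℝ f y v) x w = fderiv ℝ (fun y => fderiv ℝ f y w) x v := by
    have hf' := (hf.fderiv_right (m := 1) (by norm_num)).differentiable (by simp) x
    rw [fderiv_clm_apply hf' (by fun_prop), fderiv_clm_apply hf' (by fun_prop)]
    simpa using hf.contDiffAt.isSymmSndFDerivAt (by simp) w v
  have hminor (v w e : R3) : fderiv ℝ
      (fun y => fderiv ℝ η y v * fderiv ℝ ψ y w - fderiv ℝ η y w * fderiv ℝ ψ y v) x e =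
      fderiv ℝ η x v * fderiv ℝ (fun y => fderiv ℝ ψ y w) x e +
        fderiv ℝ ψ x w * fderiv ℝ (fun y => fderiv ℝ η y v) x e -
      (fderiv ℝ η x w * fderiv ℝ (fun y => fderiv ℝ ψ y v) x e +
        fderiv ℝ ψ x v * fderiv ℝ (fun y => fderiv ℝ η y w) x e) := by
    rw [fderiv_fun_sub ((hdiff hη v).fun_mul (hdiff hψ w))
      ((hdiff hη w).fun_mul (hdiff hψ v)),
      fderiv_fun_mul (hdiff hη v) (hdiff hψ w), fderiv_fun_mul (hdiff hη w) (hdiff hψ v)]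
    rfl
  simp only [Fin.sum_univ_three, formCross_apply, cross_apply, coordVec,
    ContinuousLinearMap.coe_pi', ContinuousLinearMap.apply_apply, Matrix.cons_val, hminor]
  rw [hsymm hη (Pi.single 2 1) (Pi.single 0 1), hsymm hψ (Pi.single 2 1) (Pi.single 0 1),
    hsymm hη (Pi.single 2 1) (Pi.single 1 1), hsymm hψ (Pi.single 2 1) (Pi.single 1 1),
    hsymm hη (Pi.single 1 1) (Pi.single 0 1), hsymm hψ (Pi.single 1 1) (Pi.single 0 1)]
  ring

variable {u v w : R3 → ℝ} {p q s : R3 → R3 →L[ℝ] ℝ}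

theorem BoundedSobolev.hasWeakDiv_formCross_fderiv {r : ℝ≥0∞} (hr : 1 ≤ r)
    (hw : BoundedSobolev w s r volume) {ψ : R3 → ℝ} (hψ : ContDiff ℝ (⊤ : ℕ∞) ψ)
    (hψc : HasCompactSupport ψ) :
    HasWeakDiv (fun x => formCross (s x) (fderiv ℝ ψ x)) 0 volume where
  locallyIntegrable_field := (integrable_clm_apply_of_hasCompactSupport
    (formCross.flip.continuous.comp (hψ.continuous_fderiv (by simp)))
    ((hψc.fderiv ℝ).comp_left (map_zero formCross.flip))
    (hw.locallyIntegrable_fderiv hr)).locallyIntegrable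
  locallyIntegrable_div := locallyIntegrable_zero
  integral_fderiv_apply η hη hηc := by
    have hG : ContDiff ℝ (⊤ : ℕ∞) fun x => formCross (fderiv ℝ ψ x) (fderiv ℝ η x) :=
      (formCross.contDiff.comp (hψ.fderiv_right (by norm_cast))).clm_apply
        (hη.fderiv_right (by norm_cast))
    have hGc : HasCompactSupport fun x => formCross (fderiv ℝ ψ x) (fderiv ℝ η x) :=
      (hηc.fderiv ℝ).mono' fun x hx => subset_tsupport _ fun h => hx (by simp [h])
    have hdiv := sum_fderiv_formCross_fderiv (hψ.of_le (by norm_cast))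
      (hη.of_le (by norm_cast))
    simp only [fun x => apply_formCross_rotate (fderiv ℝ η x) (s x) (fderiv ℝ ψ x)]
    rw [hw.integral_apply_of_contDiff hr hG hGc]
    simp only [hdiv, zero_mul, Pi.zero_apply, mul_zero, integral_zero]

theorem BoundedSobolev.hasWeakDiv_formCross (hv : BoundedSobolev v q 2 volume)
    (hw : BoundedSobolev w s 2 volume) :
    HasWeakDiv (fun x => formCross (q x) (s x)) 0 volume where
  locallyIntegrable_field := (memLp_one_iff_integrable.1
    (formCross.memLp_of_bilin 1 hv.memLp_fderiv hw.memLp_fderiv)).locallyIntegrable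
  locallyIntegrable_div := locallyIntegrable_zero
  integral_fderiv_apply ψ hψ hψc := by
    simp only [fun x => apply_formCross_rotate (fderiv ℝ ψ x) (q x) (s x)]
    have hψ2 (r : ℝ≥0∞) : MemLp (fderiv ℝ ψ) r volume :=
      (hψ.continuous_fderiv (by simp)).memLp_of_hasCompactSupport (hψc.fderiv ℝ)
    rw [hv.integral_apply_eq_zero (by simp) (hw.hasWeakDiv_formCross_fderiv one_le_two hψ hψc)
      (memLp_one_iff_integrable.1 (formCross.memLp_of_bilin 1 hw.memLp_fderiv (hψ2 2)))
      (formCross.memLp_of_bilin 2 hw.memLp_fderiv (hψ2 ∞))]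
    simp

theorem integral_apply_formCross_eq_zero (hu : BoundedSobolev u p 2 volume)
    (hv : BoundedSobolev v q 2 volume) (hw : BoundedSobolev w s 2 volume)
    (hvw : MemLp (fun x => formCross (q x) (s x)) 2 volume) :
    ∫ x, p x (formCross (q x) (s x)) = 0 :=
  hu.integral_apply_eq_zero (by simp) (hv.hasWeakDiv_formCross hw)
    (memLp_one_iff_integrable.1 (formCross.memLp_of_bilin 1 hv.memLp_fderiv hw.memLp_fderiv)) hvw

end NullLagrangian

/-! ### Determinants of four vectors -/

section DeterminantBounds

open scoped Matrix

variable {a b c d : R4}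

theorem vecMul_of_orthonormal (ha : nsq a = 1) (hab : dot a b = 0) (hac : dot a c = 0)
    (had : dot a d = 0) :
    a ᵥ* Matrix.of (fun i j => ![a, b, c, d] j i) = Pi.single 0 1 := by
  ext j
  fin_cases j
  exacts [ha, hab, hac, had]

theorem det4_sq (a b c d : R4) : det4 a b c d ^ 2 =
    Matrix.det (Matrix.of fun i j => dot (![a, b, c, d] i) (![a, b, c, d] j)) := by
  rw [sq, det4]
  nth_rw 1 [← Matrix.det_transpose]
  rw [← Matrix.det_mul]
  rfl

theorem det4_sq_of_orthogonal (ha : nsq a = 1) (hab : dot a b = 0) (hac : dot a c = 0)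
    (had : dot a d = 0) : det4 a b c d ^ 2 = gram b c d := by
  have hgram : (Matrix.of fun i j => dot (![a, b, c, d] i) (![a, b, c, d] j)).submatrix
      Fin.succ Fin.succ = !![dot b b, dot b c, dot b d; dot c b, dot c c, dot c d;
        dot d b, dot d c, dot d d] := by
    ext i j
    fin_cases i <;> fin_cases j <;> rfl
  rw [det4_sq, Matrix.det_succ_row_zero, gram, ← hgram]
  simp [Fin.sum_univ_succ, show dot a a = 1 from ha, hab, hac, had]

theorem det4_mul_apply_three (ha : nsq a = 1) (hab : dot a b = 0) (hac : dot a c = 0)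
    (had : dot a d = 0) : det4 a b c d * a 3 =
      -Matrix.det (Matrix.of fun i j : Fin 3 => ![b, c, d] j i.castSucc) := by
  set M : Matrix (Fin 4) (Fin 4) ℝ := Matrix.of fun i j => ![a, b, c, d] j i
  have hrow : M.det • a = Pi.single 0 1 ᵥ* M.adjugate := by
    rw [← vecMul_of_orthonormal ha hab hac had, Matrix.vecMul_vecMul, Matrix.mul_adjugate,
      Matrix.vecMul_smul, Matrix.vecMul_one]
  have hminor : M.submatrix (Fin.succAbove 3) Fin.succ =
      Matrix.of fun i j : Fin 3 => ![b, c, d] j i.castSucc := by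
    ext i j
    fin_cases i <;> fin_cases j <;> rfl
  calc M.det * a 3 = M.adjugate 0 3 := by simpa using congrFun hrow 3
    _ = -Matrix.det (Matrix.of fun i j : Fin 3 => ![b, c, d] j i.castSucc) := by
        rw [Matrix.adjugate_fin_succ_eq_det_submatrix, ← hminor, Fin.succAbove_zero]
        norm_num

theorem wedgeSq_eq_sum_sq (b c : R4) :
    wedgeSq b c = 2⁻¹ * ∑ i, ∑ j, (b i * c j - b j * c i) ^ 2 := by
  simp only [wedgeSq, nsq, dot, Fin.sum_univ_four]
  ring

theorem wedgeSq_nonneg (b c : R4) : 0 ≤ wedgeSq b c := by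
  rw [wedgeSq_eq_sum_sq]
  positivity

theorem sq_mul_sub_mul_le_wedgeSq (b c : R4) (i j : Fin 4) :
    (b i * c j - b j * c i) ^ 2 ≤ wedgeSq b c := by
  rcases eq_or_ne i j with rfl | hij
  · simpa using wedgeSq_nonneg b c
  · have hsum := Finset.add_le_sum (s := Finset.univ) (i := (i, j)) (j := (j, i))
      (f := fun k : Fin 4 × Fin 4 => (b k.1 * c k.2 - b k.2 * c k.1) ^ 2)
      (fun k _ => sq_nonneg _) (Finset.mem_univ _) (Finset.mem_univ _) (by simp [hij])
    rw [Fintype.sum_prod_type] at hsum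
    rw [wedgeSq_eq_sum_sq]
    dsimp only at hsum
    nlinarith

theorem nsq_nonneg (b : R4) : 0 ≤ nsq b := by
  unfold nsq dot
  exact Finset.sum_nonneg fun i _ => mul_self_nonneg (b i)

theorem dot_comm (b c : R4) : dot b c = dot c b := by simp only [dot, mul_comm]

theorem gram_le_nsq_mul_wedgeSq (b c d : R4) : gram b c d ≤ nsq b * wedgeSq c d := by
  have hnsq (s t : ℝ) : nsq (s • d - t • c) =
      s ^ 2 * nsq d - 2 * s * t * dot c d + t ^ 2 * nsq c := by
    simp only [nsq, dot, Fin.sum_univ_four, Pi.sub_apply, Pi.smul_apply, smul_eq_mul]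
    ring
  have hgram : nsq b * wedgeSq c d - gram b c d = nsq (dot b c • d - dot b d • c) := by
    rw [hnsq, gram, Matrix.det_fin_three]
    simp only [dot_comm c b, dot_comm d b, dot_comm d c, wedgeSq, nsq, Matrix.of_apply,
      Matrix.cons_val]
    ring
  linarith [nsq_nonneg (dot b c • d - dot b d • c)]

theorem nsq_mul_gram_le (b c d : R4) : nsq b * gram b c d ≤ wedgeSq b c * wedgeSq b d := by
  have hgram : wedgeSq b c * wedgeSq b d - nsq b * gram b c d =
      (nsq b * dot c d - dot b c * dot b d) ^ 2 := by
    rw [gram, Matrix.det_fin_three]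
    simp only [dot_comm c b, dot_comm d b, dot_comm d c, wedgeSq, nsq, Matrix.of_apply,
      Matrix.cons_val]
    ring
  linarith [sq_nonneg (nsq b * dot c d - dot b c * dot b d)]

theorem det4_pow_four_le (ha : nsq a = 1) (hab : dot a b = 0) (hac : dot a c = 0)
    (had : dot a d = 0) : det4 a b c d ^ 4 ≤ wedgeSq b c * wedgeSq b d * wedgeSq c d := by
  have hgram := det4_sq_of_orthogonal ha hab hac had
  calc det4 a b c d ^ 4 = gram b c d * gram b c d := by rw [← hgram]; ring
    _ ≤ gram b c d * (nsq b * wedgeSq c d) :=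
        mul_le_mul_of_nonneg_left (gram_le_nsq_mul_wedgeSq b c d) (hgram ▸ sq_nonneg _)
    _ = nsq b * gram b c d * wedgeSq c d := by ring
    _ ≤ wedgeSq b c * wedgeSq b d * wedgeSq c d :=
        mul_le_mul_of_nonneg_right (nsq_mul_gram_le b c d) (wedgeSq_nonneg c d)

theorem abs_mul_le_add_of_pow_four_le {t D A lam : ℝ} (hlam : 0 < lam) (hA : 0 ≤ A)
    (ht : |t| ≤ 2) (hD : D ^ 4 ≤ A ^ 3) : |t * D| ≤ lam * A + t ^ 2 / lam ^ 3 := by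
  have ht2 : t ^ 2 ≤ 4 := by rw [← sq_abs]; nlinarith [abs_nonneg t]
  have hX : 0 ≤ lam * A := by positivity
  have hY : 0 ≤ t ^ 2 / lam ^ 3 := by positivity
  refine (pow_le_pow_iff_left₀ (abs_nonneg _) (add_nonneg hX hY) (four_ne_zero)).1 ?_
  calc |t * D| ^ 4 = t ^ 4 * D ^ 4 := by rw [Even.pow_abs (by decide)]; ring
    _ ≤ t ^ 2 * 4 * A ^ 3 := by
        gcongr
        nlinarith [sq_nonneg t]
    _ = 4 * (lam * A) ^ 3 * (t ^ 2 / lam ^ 3) := by field_simp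
    _ ≤ (lam * A + t ^ 2 / lam ^ 3) ^ 4 := by
        generalize lam * A = X at hX
        generalize t ^ 2 / lam ^ 3 = Y at hY
        have : (X + Y) ^ 4 - 4 * X ^ 3 * Y = X ^ 4 + 6 * X ^ 2 * Y ^ 2 + 4 * X * Y ^ 3 + Y ^ 4 := by
          ring
        have : 0 ≤ X ^ 4 + 6 * X ^ 2 * Y ^ 2 + 4 * X * Y ^ 3 + Y ^ 4 := by positivity
        linarith

end DeterminantBounds

/-! ### Averages over translates -/

theorem exists_mem_integral_translate_mul_le {G : Type*} [AddGroup G] [MeasurableSpace G]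
    [MeasurableAdd₂ G] {μ : Measure G} [SFinite μ] [μ.IsAddLeftInvariant] {w D : G → ℝ} {C K : ℝ}
    {s : Set G} (hw : AEStronglyMeasurable w μ) (hwC : ∀ᵐ x ∂μ, |w x| ≤ C)
    (hD : Integrable D μ) (hD0 : 0 ≤ D) (hs : μ s ≠ 0) (hs' : μ s ≠ ∞)
    (hK : ∀ x, ⨍ v in s, w (v + x) ∂μ ≤ K) :
    ∃ v ∈ s, ∫ x, w (v + x) * D x ∂μ ≤ K * ∫ x, D x ∂μ := by
  have : Fact (μ s < ∞) := ⟨hs'.lt_top⟩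
  have hadd := quasiMeasurePreserving_add (μ.restrict s) μ
  have hprod : Integrable (fun z : G × G => w (z.1 + z.2) * D z.2) ((μ.restrict s).prod μ) :=
    (hD.comp_snd _).bdd_mul (hw.comp_quasiMeasurePreserving hadd) (hadd.ae hwC)
  obtain ⟨v, hv, hle⟩ := exists_le_setAverage hs hs' hprod.integral_prod_left
  refine ⟨v, hv, hle.trans ?_⟩
  calc ⨍ v in s, ∫ x, w (v + x) * D x ∂μ ∂μ
      = ∫ x, (⨍ v in s, w (v + x) ∂μ) * D x ∂μ := by
        rw [setAverage_eq, integral_integral_swap hprod, ← integral_smul]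
        simp only [setAverage_eq, smul_eq_mul, mul_assoc, integral_mul_const]
    _ ≤ ∫ x, K * D x ∂μ := by
        refine integral_mono ?_ (hD.const_mul K) fun x =>
          mul_le_mul_of_nonneg_right (hK x) (hD0 x)
        simpa only [setAverage_eq, smul_eq_mul, mul_assoc, integral_mul_const]
          using hprod.integral_prod_right.const_mul (μ.real s)⁻¹
    _ = K * ∫ x, D x ∂μ := integral_const_mul K D

/-! ### Skyrme maps -/

theorem gradSq_nonneg (φ : SkyrmeMap) (x : R3) : 0 ≤ gradSq φ x :=
  Finset.sum_nonneg fun _ _ => nsq_nonneg _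

theorem wedgeSq_le_ASq (φ : SkyrmeMap) (x : R3) (i j : Fin 3) :
    wedgeSq (φ.pderiv i x) (φ.pderiv j x) ≤ ASq φ x := by
  have hnonneg (i j : Fin 3) := wedgeSq_nonneg (φ.pderiv i x) (φ.pderiv j x)
  exact (Finset.single_le_sum (fun j _ => hnonneg i j) (Finset.mem_univ j)).trans
    (Finset.single_le_sum (f := fun i => ∑ j, wedgeSq (φ.pderiv i x) (φ.pderiv j x))
      (fun i _ => Finset.sum_nonneg fun j _ => hnonneg i j) (Finset.mem_univ i))

theorem ASq_nonneg (φ : SkyrmeMap) (x : R3) : 0 ≤ ASq φ x :=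
  (wedgeSq_nonneg _ _).trans (wedgeSq_le_ASq φ x 0 0)

theorem energyDensity_nonneg (φ : SkyrmeMap) (x : R3) : 0 ≤ energyDensity φ x :=
  add_nonneg (gradSq_nonneg φ x) (ASq_nonneg φ x)

theorem sum_sq_pderiv_apply_le_gradSq (φ : SkyrmeMap) (x : R3) (a : Fin 4) :
    ∑ i, φ.pderiv i x a ^ 2 ≤ gradSq φ x := by
  refine Finset.sum_le_sum fun i _ => ?_
  rw [sq]
  exact Finset.single_le_sum (f := fun a => φ.pderiv i x a * φ.pderiv i x a)
    (fun a _ => mul_self_nonneg _) (Finset.mem_univ a)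

namespace SkyrmeMap

variable {φ : SkyrmeMap}

theorem aestronglyMeasurable_pderiv (φ : SkyrmeMap) (i : Fin 3) :
    AEStronglyMeasurable (φ.pderiv i) volume :=
  (φ.pderiv_locInt i).aestronglyMeasurable

theorem aestronglyMeasurable_energyDensity (φ : SkyrmeMap) :
    AEStronglyMeasurable (energyDensity φ) volume := by
  have hd := φ.aestronglyMeasurable_pderiv
  unfold energyDensity gradSq ASq wedgeSq nsq dot
  fun_prop

theorem aestronglyMeasurable_detDen (φ : SkyrmeMap) :
    AEStronglyMeasurable (detDen φ) volume := by
  have hd (i : Fin 3) := (φ.aestronglyMeasurable_pderiv i).aemeasurable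
  have hcols : AEMeasurable
      (fun x => ![φ.toFun x, φ.pderiv 0 x, φ.pderiv 1 x, φ.pderiv 2 x]) volume :=
    aemeasurable_pi_lambda _ fun j => by
      fin_cases j
      exacts [φ.meas.aemeasurable, hd 0, hd 1, hd 2]
  have hdet : Continuous fun z : Fin 4 → R4 => Matrix.det (Matrix.of fun i j => z j i) :=
    Continuous.matrix_det (continuous_matrix fun i j => by dsimp only [Matrix.of_apply]; fun_prop)
  exact hdet.comp_aestronglyMeasurable hcols.aestronglyMeasurable

theorem memLp_two_of_sq_le_energyDensity (hφ : memX φ) {f : R3 → ℝ}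
    (hf : AEStronglyMeasurable f volume) (hle : ∀ x, f x ^ 2 ≤ energyDensity φ x) :
    MemLp f 2 volume :=
  (memLp_two_iff_integrable_sq hf).2 <| hφ.mono' (hf.pow 2) <| ae_of_all _ fun x => by
    rw [Real.norm_of_nonneg (sq_nonneg _)]
    exact hle x

/-- The weak derivative of the component `φ_a`. -/
def compDeriv (φ : SkyrmeMap) (a : Fin 4) (x : R3) : R3 →L[ℝ] ℝ :=
  ∑ i, φ.pderiv i x a • ContinuousLinearMap.proj i

theorem compDeriv_apply (φ : SkyrmeMap) (a : Fin 4) (x v : R3) :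
    φ.compDeriv a x v = ∑ i, φ.pderiv i x a * v i := by
  simp [compDeriv]

theorem compDeriv_single (φ : SkyrmeMap) (a : Fin 4) (x : R3) (i : Fin 3) :
    φ.compDeriv a x (Pi.single i 1) = φ.pderiv i x a := by
  simp [compDeriv_apply, Pi.single_apply]

theorem coordVec_compDeriv (φ : SkyrmeMap) (a : Fin 4) (x : R3) :
    coordVec (Fin 3) (φ.compDeriv a x) = fun i => φ.pderiv i x a :=
  funext (φ.compDeriv_single a x)

theorem sq_compDeriv_apply_le (φ : SkyrmeMap) (a : Fin 4) (x v : R3) :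
    φ.compDeriv a x v ^ 2 ≤ (∑ i, v i ^ 2) * gradSq φ x := by
  rw [compDeriv_apply]
  calc (∑ i, φ.pderiv i x a * v i) ^ 2 ≤ (∑ i, φ.pderiv i x a ^ 2) * ∑ i, v i ^ 2 :=
        Finset.sum_mul_sq_le_sq_mul_sq _ _ _
    _ ≤ (∑ i, v i ^ 2) * gradSq φ x := by
        rw [mul_comm]
        gcongr
        exact sum_sq_pderiv_apply_le_gradSq φ x a

theorem ae_sq_apply_le_one (φ : SkyrmeMap) (a : Fin 4) : ∀ᵐ x, φ.toFun x a ^ 2 ≤ 1 := by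
  filter_upwards [φ.sphere] with x hx
  rw [← hx, sq]
  exact Finset.single_le_sum (f := fun a => φ.toFun x a * φ.toFun x a)
    (fun a _ => mul_self_nonneg _) (Finset.mem_univ a)

theorem ae_abs_apply_le_one (φ : SkyrmeMap) (a : Fin 4) : ∀ᵐ x, |φ.toFun x a| ≤ 1 :=
  (φ.ae_sq_apply_le_one a).mono fun _ hx => (sq_le_one_iff_abs_le_one _).1 hx

theorem memLp_top_apply (φ : SkyrmeMap) (a : Fin 4) : MemLp (fun x => φ.toFun x a) ∞ volume :=
  memLp_top_of_bound ((measurable_pi_apply a).comp φ.meas).aestronglyMeasurable 1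
    (φ.ae_abs_apply_le_one a)

theorem locallyIntegrable_pderiv_apply (φ : SkyrmeMap) (i : Fin 3) (a : Fin 4) :
    LocallyIntegrable (fun x => φ.pderiv i x a) volume := fun x =>
  let ⟨s, hs, hint⟩ := φ.pderiv_locInt i x
  ⟨s, hs, (ContinuousLinearMap.proj (R := ℝ) (φ := fun _ : Fin 4 => ℝ) a).integrable_comp hint⟩

theorem memLp_pderiv_apply (hφ : memX φ) (i : Fin 3) (a : Fin 4) :
    MemLp (fun x => φ.pderiv i x a) 2 volume := by
  refine memLp_two_of_sq_le_energyDensity hφ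
    (φ.locallyIntegrable_pderiv_apply i a).aestronglyMeasurable fun x => ?_
  calc φ.pderiv i x a ^ 2 ≤ ∑ i, φ.pderiv i x a ^ 2 :=
        Finset.single_le_sum (f := fun i => φ.pderiv i x a ^ 2) (fun _ _ => sq_nonneg _)
          (Finset.mem_univ i)
    _ ≤ gradSq φ x := sum_sq_pderiv_apply_le_gradSq φ x a
    _ ≤ energyDensity φ x := le_add_of_nonneg_right (ASq_nonneg φ x)

theorem boundedSobolev (hφ : memX φ) (a : Fin 4) :
    BoundedSobolev (fun x => φ.toFun x a) (φ.compDeriv a) 2 volume where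
  memLp_top := φ.memLp_top_apply a
  memLp_fderiv := by
    let pr (i : Fin 3) : R3 →L[ℝ] ℝ := ContinuousLinearMap.proj i
    have hlin : φ.compDeriv a = fun x =>
        (∑ i, (pr i).smulRight (pr i)) fun i => φ.pderiv i x a := by
      ext x v
      simp [compDeriv_apply, pr]
    rw [hlin]
    exact (∑ i, (pr i).smulRight (pr i)).comp_memLp'
      (memLp_pi_iff.2 fun i => memLp_pderiv_apply hφ i a)
  integral_fderiv_mul ψ hψ hψc v := by
    have hu : LocallyIntegrable (fun x => φ.toFun x a) volume :=
      (φ.memLp_top_apply a).locallyIntegrable le_top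
    have hl (i : Fin 3) : Integrable (fun x => fderiv ℝ ψ x (Pi.single i 1) * φ.toFun x a) :=
      hu.integrable_smul_left_of_hasCompactSupport
        ((hψ.continuous_fderiv (by simp)).clm_apply continuous_const) (hψc.fderiv_apply ℝ _)
    have hr (i : Fin 3) : Integrable (fun x => ψ x * φ.pderiv i x a) :=
      (φ.locallyIntegrable_pderiv_apply i a).integrable_smul_left_of_hasCompactSupport
        hψ.continuous hψc
    calc ∫ x, fderiv ℝ ψ x v * φ.toFun x a
        = ∫ x, ∑ i, v i * (fderiv ℝ ψ x (Pi.single i 1) * φ.toFun x a) := by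
          refine integral_congr_ae (ae_of_all _ fun x => ?_)
          conv_lhs => rw [pi_eq_sum_univ' v]
          simp only [map_sum, map_smul, smul_eq_mul, Finset.sum_mul, mul_assoc]
      _ = ∑ i, v i * -∫ x, ψ x * φ.pderiv i x a := by
          rw [integral_finsetSum _ fun i _ => (hl i).const_mul _]
          simp only [integral_const_mul, φ.weak _ a ψ ⟨hψ, hψc⟩]
      _ = -∫ x, ∑ i, v i * (ψ x * φ.pderiv i x a) := by
          rw [integral_finsetSum _ fun i _ => (hr i).const_mul _]
          simp only [integral_const_mul, mul_neg, Finset.sum_neg_distrib]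
      _ = -∫ x, ψ x * φ.compDeriv a x v := by
          simp only [compDeriv_apply, Finset.mul_sum, mul_comm (v _), mul_assoc]

theorem ae_dot_pderiv_eq_zero (hφ : memX φ) (i : Fin 3) :
    ∀ᵐ x, dot (φ.toFun x) (φ.pderiv i x) = 0 := by
  have hsphere : ∀ᵐ x, ∑ a, φ.toFun x a ^ 2 = 1 := by
    filter_upwards [φ.sphere] with x hx
    simpa only [nsq, dot, ← sq] using hx
  filter_upwards [BoundedSobolev.sum_mul_fderiv_ae_eq_zero one_le_two ENNReal.ofNat_ne_top
    (boundedSobolev hφ) hsphere (Pi.single i 1)] with x hx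
  simpa only [dot, compDeriv_single] using hx

theorem ae_detDen_pow_four_le (hφ : memX φ) : ∀ᵐ x, detDen φ x ^ 4 ≤ ASq φ x ^ 3 := by
  filter_upwards [φ.sphere, ae_all_iff.2 (ae_dot_pderiv_eq_zero hφ)] with x hx horth
  refine (det4_pow_four_le hx (horth 0) (horth 1) (horth 2)).trans ?_
  rw [pow_three']
  have hA := ASq_nonneg φ x
  have hw (i j : Fin 3) := wedgeSq_nonneg (φ.pderiv i x) (φ.pderiv j x)
  gcongr <;> first | exact hw _ _ | exact wedgeSq_le_ASq φ x _ _

theorem ae_abs_detDen_le (hφ : memX φ) : ∀ᵐ x, |detDen φ x| ≤ energyDensity φ x := by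
  filter_upwards [φ.sphere, ae_all_iff.2 (ae_dot_pderiv_eq_zero hφ)] with x hx horth
  have hG : nsq (φ.pderiv 0 x) ≤ gradSq φ x :=
    Finset.single_le_sum (f := fun i => nsq (φ.pderiv i x)) (fun _ _ => nsq_nonneg _)
      (Finset.mem_univ 0)
  have hA := ASq_nonneg φ x
  refine abs_le_of_sq_le_sq ?_ (energyDensity_nonneg φ x)
  calc detDen φ x ^ 2 = gram (φ.pderiv 0 x) (φ.pderiv 1 x) (φ.pderiv 2 x) :=
        det4_sq_of_orthogonal hx (horth 0) (horth 1) (horth 2)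
    _ ≤ nsq (φ.pderiv 0 x) * wedgeSq (φ.pderiv 1 x) (φ.pderiv 2 x) :=
        gram_le_nsq_mul_wedgeSq _ _ _
    _ ≤ gradSq φ x * ASq φ x :=
        mul_le_mul hG (wedgeSq_le_ASq φ x 1 2) (wedgeSq_nonneg _ _) (gradSq_nonneg φ x)
    _ ≤ energyDensity φ x ^ 2 := by
        unfold energyDensity
        nlinarith [gradSq_nonneg φ x]

theorem integrable_detDen (hφ : memX φ) : Integrable (detDen φ) volume :=
  hφ.mono' φ.aestronglyMeasurable_detDen (ae_abs_detDen_le hφ)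

theorem memLp_formCross_compDeriv (hφ : memX φ) (a b : Fin 4) :
    MemLp (fun x => formCross (φ.compDeriv a x) (φ.compDeriv b x)) 2 volume := by
  have hminor (i j : Fin 3) : MemLp (fun x => φ.pderiv i x a * φ.pderiv j x b -
      φ.pderiv j x a * φ.pderiv i x b) 2 volume := by
    have hm (i : Fin 3) (a : Fin 4) := (φ.locallyIntegrable_pderiv_apply i a).aestronglyMeasurable
    refine memLp_two_of_sq_le_energyDensity hφ
      (((hm i a).mul (hm j b)).sub ((hm j a).mul (hm i b))) fun x => ?_
    calc (φ.pderiv i x a * φ.pderiv j x b - φ.pderiv j x a * φ.pderiv i x b) ^ 2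
        = (φ.pderiv i x a * φ.pderiv j x b - φ.pderiv i x b * φ.pderiv j x a) ^ 2 := by ring
      _ ≤ wedgeSq (φ.pderiv i x) (φ.pderiv j x) := sq_mul_sub_mul_le_wedgeSq _ _ a b
      _ ≤ ASq φ x := wedgeSq_le_ASq φ x i j
      _ ≤ energyDensity φ x := le_add_of_nonneg_left (gradSq_nonneg φ x)
  refine memLp_pi_iff.2 fun i => ?_
  simp only [formCross_apply, coordVec_compDeriv, cross_apply]
  fin_cases i
  exacts [hminor 1 2, hminor 2 0, hminor 0 1]

theorem ae_detDen_mul_apply_three (hφ : memX φ) : ∀ᵐ x, detDen φ x * φ.toFun x 3 =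
    -φ.compDeriv 0 x (formCross (φ.compDeriv 1 x) (φ.compDeriv 2 x)) := by
  filter_upwards [φ.sphere, ae_all_iff.2 (ae_dot_pderiv_eq_zero hφ)] with x hx horth
  rw [detDen, det4_mul_apply_three hx (horth 0) (horth 1) (horth 2),
    clm_apply_eq_coordVec_dotProduct, formCross_apply, triple_product_eq_det]
  congr 2
  ext i j
  fin_cases i <;> fin_cases j <;> simp [coordVec_compDeriv]

theorem integral_detDen_mul_apply_three (hφ : memX φ) : ∫ x, detDen φ x * φ.toFun x 3 = 0 := by
  rw [integral_congr_ae (ae_detDen_mul_apply_three hφ), integral_neg,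
    integral_apply_formCross_eq_zero (boundedSobolev hφ 0) (boundedSobolev hφ 1)
      (boundedSobolev hφ 2) (memLp_formCross_compDeriv hφ 1 2), neg_zero]

theorem abs_integral_detDen_le (hφ : memX φ) :
    |∫ x, detDen φ x| ≤ ∫ x, (1 - φ.toFun x 3) * |detDen φ x| := by
  have hu := φ.ae_abs_apply_le_one 3
  have hD := integrable_detDen hφ
  have hDu := hD.mul_bdd (φ.memLp_top_apply 3).1 hu
  calc |∫ x, detDen φ x| = |∫ x, (1 - φ.toFun x 3) * detDen φ x| := by
        rw [← sub_zero (∫ x, detDen φ x), ← integral_detDen_mul_apply_three hφ,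
          ← integral_sub hD hDu]
        simp only [mul_comm _ (detDen φ _), mul_one_sub]
    _ ≤ ∫ x, |(1 - φ.toFun x 3) * detDen φ x| := abs_integral_le_integral_abs
    _ = ∫ x, (1 - φ.toFun x 3) * |detDen φ x| := by
        refine integral_congr_ae (hu.mono fun x hx => ?_)
        simp only [abs_mul, abs_of_nonneg (sub_nonneg.2 (le_of_abs_le hx))]

theorem ae_abs_one_sub_apply_le_two (φ : SkyrmeMap) (a : Fin 4) :
    ∀ᵐ x, |1 - φ.toFun x a| ≤ 2 := by
  filter_upwards [φ.ae_abs_apply_le_one a] with x hx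
  rw [abs_le] at hx ⊢
  constructor <;> linarith

theorem aestronglyMeasurable_one_sub_apply (φ : SkyrmeMap) (a : Fin 4) :
    AEStronglyMeasurable (fun x => 1 - φ.toFun x a) volume :=
  aestronglyMeasurable_const.sub (φ.memLp_top_apply a).1

theorem integrable_translate_mul_abs_detDen (hφ : memX φ) (v : R3) :
    Integrable (fun x => (1 - φ.toFun (v + x) 3) * |detDen φ x|) volume :=
  (integrable_detDen hφ).abs.bdd_mul
    ((φ.aestronglyMeasurable_one_sub_apply 3).comp_measurePreserving
      (measurePreserving_add_left volume v))
    ((measurePreserving_add_left volume v).quasiMeasurePreserving.ae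
      (φ.ae_abs_one_sub_apply_le_two 3))

theorem integral_sq_translate_sub_le (hφ : memX φ) (a : Fin 4) (v : R3) :
    ∫ x, (φ.toFun (v + x) a - φ.toFun x a) ^ 2 ≤ (∑ i, v i ^ 2) * energy φ := by
  simp only [add_comm v]
  calc ∫ x, (φ.toFun (x + v) a - φ.toFun x a) ^ 2 ≤ ∫ x, φ.compDeriv a x v ^ 2 :=
        (boundedSobolev hφ a).integral_sq_translate_sub_le v
    _ ≤ ∫ x, (∑ i, v i ^ 2) * energyDensity φ x := by
        refine integral_mono_of_nonneg (ae_of_all _ fun x => sq_nonneg _) (hφ.const_mul _)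
          (ae_of_all _ fun x => (φ.sq_compDeriv_apply_le a x v).trans ?_)
        have hA := ASq_nonneg φ x
        dsimp only [energyDensity]
        gcongr
        linarith
    _ = (∑ i, v i ^ 2) * energy φ := integral_const_mul _ _

theorem ae_mul_abs_detDen_le_translate (hφ : memX φ) {lam : ℝ} (hlam : 0 < lam) (v : R3) :
    ∀ᵐ x, (1 - φ.toFun x 3) * |detDen φ x| ≤ (1 - φ.toFun (v + x) 3) * |detDen φ x| +
      (lam * energyDensity φ x + (φ.toFun (v + x) 3 - φ.toFun x 3) ^ 2 / lam ^ 3) := by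
  have hu := φ.ae_abs_apply_le_one 3
  filter_upwards [hu, (measurePreserving_add_left volume v).quasiMeasurePreserving.ae hu,
    ae_detDen_pow_four_le hφ] with x hx hxv hD
  have hE : ASq φ x ≤ energyDensity φ x := le_add_of_nonneg_left (gradSq_nonneg φ x)
  have ht : |φ.toFun (v + x) 3 - φ.toFun x 3| ≤ 2 := by
    refine (abs_sub _ _).trans ?_
    linarith
  have hyoung := abs_mul_le_add_of_pow_four_le hlam (ASq_nonneg φ x) ht hD
  have hle : (φ.toFun (v + x) 3 - φ.toFun x 3) * |detDen φ x| ≤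
      |(φ.toFun (v + x) 3 - φ.toFun x 3) * detDen φ x| := by
    rw [abs_mul]
    gcongr
    exact le_abs_self _
  linarith [mul_le_mul_of_nonneg_left hE hlam.le]

theorem integral_mul_abs_detDen_le_translate (hφ : memX φ) {lam : ℝ} (hlam : 0 < lam) (v : R3) :
    ∫ x, (1 - φ.toFun x 3) * |detDen φ x| ≤ (∫ x, (1 - φ.toFun (v + x) 3) * |detDen φ x|) +
      (lam + (∑ i, v i ^ 2) / lam ^ 3) * energy φ := by
  have hint (v : R3) := integrable_translate_mul_abs_detDen hφ v
  have hsq : Integrable (fun x => (φ.toFun (v + x) 3 - φ.toFun x 3) ^ 2) volume := by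
    simpa only [add_comm v] using
      ((boundedSobolev hφ 3).memLp_translate_sub one_le_two (by simp) v).integrable_sq
  have herr : Integrable (fun x => lam * energyDensity φ x +
      (φ.toFun (v + x) 3 - φ.toFun x 3) ^ 2 / lam ^ 3) volume :=
    (hφ.const_mul lam).add (hsq.div_const (lam ^ 3))
  calc ∫ x, (1 - φ.toFun x 3) * |detDen φ x|
      ≤ ∫ x, ((1 - φ.toFun (v + x) 3) * |detDen φ x| +
          (lam * energyDensity φ x + (φ.toFun (v + x) 3 - φ.toFun x 3) ^ 2 / lam ^ 3)) :=
        integral_mono_ae (by simpa only [zero_add] using hint 0) ((hint v).add herr)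
          (ae_mul_abs_detDen_le_translate hφ hlam v)
    _ = (∫ x, (1 - φ.toFun (v + x) 3) * |detDen φ x|) + (lam * energy φ +
          (∫ x, (φ.toFun (v + x) 3 - φ.toFun x 3) ^ 2) / lam ^ 3) := by
        rw [integral_add (hint v) herr, integral_add (hφ.const_mul lam) (hsq.div_const _),
          integral_const_mul, integral_div, energy]
    _ ≤ (∫ x, (1 - φ.toFun (v + x) 3) * |detDen φ x|) +
          (lam * energy φ + (∑ i, v i ^ 2) * energy φ / lam ^ 3) := by
        gcongr
        exact integral_sq_translate_sub_le hφ 3 v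
    _ = (∫ x, (1 - φ.toFun (v + x) 3) * |detDen φ x|) +
          (lam + (∑ i, v i ^ 2) / lam ^ 3) * energy φ := by ring

end SkyrmeMap

/-! ### The averaging argument -/

theorem preimage_add_right_eball (x : R3) (r : ℝ) : (· + x) ⁻¹' eball x r = eball 0 r := by
  simp [eball]

theorem measure_eball_eq (x : R3) (r : ℝ) : volume (eball x r) = volume (eball 0 r) := by
  rw [← preimage_add_right_eball x r, measure_preimage_add_right]

theorem measure_eball_pos {r : ℝ} (hr : 0 < r) (x : R3) : 0 < volume (eball x r) := by
  have hopen : IsOpen (eball x r) := isOpen_lt (by fun_prop) continuous_const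
  exact hopen.measure_pos volume ⟨x, by simp [eball, sq_pos_of_pos hr]⟩

theorem measure_eball_ne_top (x : R3) (r : ℝ) : volume (eball x r) ≠ ∞ := by
  have hsub : eball x r ⊆ Metric.closedBall x |r| := by
    intro y hy
    rw [Metric.mem_closedBall, dist_pi_le_iff (abs_nonneg r)]
    exact fun i => sq_le_sq.1 ((Finset.single_le_sum (f := fun i => (y i - x i) ^ 2)
      (fun _ _ => sq_nonneg _) (Finset.mem_univ i)).trans (le_of_lt hy))
  exact ((measure_mono hsub).trans_lt measure_closedBall_lt_top).ne

theorem setAverage_translate_eball (g : R3 → ℝ) (x : R3) (r : ℝ) :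
    ⨍ v in eball 0 r, g (v + x) = ⨍ y in eball x r, g y := by
  rw [setAverage_eq, setAverage_eq, measureReal_def, measureReal_def, measure_eball_eq x,
    ← preimage_add_right_eball x r, (measurePreserving_add_right volume x).setIntegral_preimage_emb
      (measurableEmbedding_addRight x)]

/-- The density `f = |∇φ|² + |A(φ)|² + |φ - P|⁶` whose concentration is at stake. -/
def skyrmeDensity (φ : SkyrmeMap) (x : R3) : ℝ :=
  energyDensity φ x + nsq (φ.toFun x - northPole) ^ 3

theorem energyDensity_le_skyrmeDensity (φ : SkyrmeMap) (x : R3) :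
    energyDensity φ x ≤ skyrmeDensity φ x :=
  le_add_of_nonneg_right (pow_nonneg (nsq_nonneg _) 3)

theorem skyrmeDensity_nonneg (φ : SkyrmeMap) (x : R3) : 0 ≤ skyrmeDensity φ x :=
  (energyDensity_nonneg φ x).trans (energyDensity_le_skyrmeDensity φ x)

theorem nsq_sub_northPole {a : R4} (ha : nsq a = 1) : nsq (a - northPole) = 2 * (1 - a 3) := by
  simp only [nsq, dot, Fin.sum_univ_four, northPole, Pi.sub_apply, Matrix.cons_val] at ha ⊢
  linarith

theorem le_add_pow_three_div_sq {w mu : ℝ} (hw : 0 ≤ w) (hmu : 0 < mu) :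
    w ≤ mu + w ^ 3 / mu ^ 2 := by
  rcases le_total w mu with h | h
  · exact h.trans (le_add_of_nonneg_right (by positivity))
  · refine le_add_of_nonneg_of_le hmu.le ((le_div_iff₀ (by positivity)).2 ?_)
    rw [pow_succ' w]
    gcongr

theorem one_sub_apply_three_le {a : R4} (ha : nsq a = 1) {mu : ℝ} (hmu : 0 < mu) :
    1 - a 3 ≤ mu + nsq (a - northPole) ^ 3 / mu ^ 2 := by
  have hw : 0 ≤ 1 - a 3 := by linarith [nsq_sub_northPole ha, nsq_nonneg (a - northPole)]
  refine (le_add_pow_three_div_sq hw hmu).trans ?_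
  rw [nsq_sub_northPole ha]
  gcongr
  linarith

namespace SkyrmeMap

variable {φ : SkyrmeMap}

theorem memX_of_integrable_skyrmeDensity (hf : Integrable (skyrmeDensity φ) volume) : memX φ :=
  hf.mono' φ.aestronglyMeasurable_energyDensity <| ae_of_all _ fun x => by
    rw [Real.norm_of_nonneg (energyDensity_nonneg φ x)]
    exact energyDensity_le_skyrmeDensity φ x

theorem setIntegral_skyrmeDensity_le_iSup (hf : Integrable (skyrmeDensity φ) volume) (r : ℝ)
    (x : R3) : ∫ y in eball x r, skyrmeDensity φ y ≤
      ⨆ y, ∫ z in eball y r, skyrmeDensity φ z := by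
  refine le_ciSup (f := fun y => ∫ z in eball y r, skyrmeDensity φ z)
    ⟨∫ y, skyrmeDensity φ y, ?_⟩ x
  rintro _ ⟨y, rfl⟩
  exact setIntegral_le_integral hf (ae_of_all _ (skyrmeDensity_nonneg φ))

theorem setAverage_one_sub_apply_three_le (hf : Integrable (skyrmeDensity φ) volume) {r mu : ℝ}
    (hr : 0 < r) (hmu : 0 < mu) (x : R3) : ⨍ y in eball x r, (1 - φ.toFun y 3) ≤
      mu + (∫ y in eball x r, skyrmeDensity φ y) / (mu ^ 2 * volume.real (eball 0 r)) := by
  have : Fact (volume (eball x r) < ∞) := ⟨(measure_eball_ne_top x r).lt_top⟩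
  have hb : 0 < volume.real (eball x r) :=
    ENNReal.toReal_pos (measure_eball_pos hr x).ne' (measure_eball_ne_top x r)
  have hfx := (hf.integrableOn (s := eball x r)).div_const (mu ^ 2)
  have hmaj : IntegrableOn (fun y => mu + skyrmeDensity φ y / mu ^ 2) (eball x r) volume :=
    (integrable_const mu).add hfx
  have hweight : ∀ᵐ y, 1 - φ.toFun y 3 ≤ mu + skyrmeDensity φ y / mu ^ 2 := by
    filter_upwards [φ.sphere] with y hy
    refine (one_sub_apply_three_le hy hmu).trans ?_
    gcongr
    exact le_add_of_nonneg_left (energyDensity_nonneg φ y)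
  have hint : IntegrableOn (fun y => 1 - φ.toFun y 3) (eball x r) :=
    .of_bound (measure_eball_ne_top x r).lt_top
      (φ.aestronglyMeasurable_one_sub_apply 3).restrict 2
      (ae_restrict_of_ae (φ.ae_abs_one_sub_apply_le_two 3))
  calc ⨍ y in eball x r, (1 - φ.toFun y 3)
      ≤ (volume.real (eball x r))⁻¹ * ∫ y in eball x r, (mu + skyrmeDensity φ y / mu ^ 2) := by
        rw [setAverage_eq, smul_eq_mul]
        exact mul_le_mul_of_nonneg_left
          (integral_mono_ae hint hmaj (ae_restrict_of_ae hweight)) (inv_nonneg.2 hb.le)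
    _ = mu + (∫ y in eball x r, skyrmeDensity φ y) / (mu ^ 2 * volume.real (eball x r)) := by
        rw [integral_add (integrable_const mu) hfx, integral_div, setIntegral_const, smul_eq_mul]
        field_simp
    _ = mu + (∫ y in eball x r, skyrmeDensity φ y) / (mu ^ 2 * volume.real (eball 0 r)) := by
        rw [measureReal_def, measure_eball_eq x, measureReal_def]

theorem exists_mem_eball_integral_translate_mul_le (hf : Integrable (skyrmeDensity φ) volume)
    {r mu : ℝ} (hr : 0 < r) (hmu : 0 < mu) :
    ∃ v ∈ eball 0 r, ∫ x, (1 - φ.toFun (v + x) 3) * |detDen φ x| ≤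
      (mu + (⨆ y, ∫ x in eball y r, skyrmeDensity φ x) / (mu ^ 2 * volume.real (eball 0 r))) *
        ∫ x, |detDen φ x| := by
  refine exists_mem_integral_translate_mul_le
    (φ.aestronglyMeasurable_one_sub_apply 3) (φ.ae_abs_one_sub_apply_le_two 3)
    (integrable_detDen (memX_of_integrable_skyrmeDensity hf)).abs
    (fun x => abs_nonneg (detDen φ x)) (measure_eball_pos hr 0).ne' (measure_eball_ne_top 0 r)
    fun x => ?_
  rw [setAverage_translate_eball fun y => 1 - φ.toFun y 3]
  refine (setAverage_one_sub_apply_three_le hf hr hmu x).trans ?_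
  gcongr
  exact setIntegral_skyrmeDensity_le_iSup hf r x

theorem abs_integral_detDen_le_iSup_setIntegral (hf : Integrable (skyrmeDensity φ) volume)
    {lam : ℝ} (hlam : 0 < lam) : |∫ x, detDen φ x| ≤
      (3 * lam + (⨆ y, ∫ x in eball y (lam ^ 2), skyrmeDensity φ x) /
        (lam ^ 2 * volume.real (eball 0 (lam ^ 2)))) * ∫ x, skyrmeDensity φ x := by
  have hφ := memX_of_integrable_skyrmeDensity hf
  obtain ⟨v, hv, hle⟩ := exists_mem_eball_integral_translate_mul_le hf (pow_pos hlam 2) hlam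
  set S := ⨆ y, ∫ x in eball y (lam ^ 2), skyrmeDensity φ x
  set b := volume.real (eball 0 (lam ^ 2))
  have hS : 0 ≤ S := Real.iSup_nonneg fun y => integral_nonneg (skyrmeDensity_nonneg φ)
  have hshift : (∑ i, v i ^ 2) / lam ^ 3 ≤ lam := by
    rw [div_le_iff₀ (by positivity)]
    have hv' : ∑ i, v i ^ 2 < (lam ^ 2) ^ 2 := by simpa [eball] using hv
    exact hv'.le.trans_eq (by ring)
  have henergy : energy φ ≤ ∫ x, skyrmeDensity φ x :=
    integral_mono hφ hf (energyDensity_le_skyrmeDensity φ)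
  have henergy' : 0 ≤ energy φ := integral_nonneg (energyDensity_nonneg φ)
  have hD : ∫ x, |detDen φ x| ≤ energy φ :=
    integral_mono_ae (integrable_detDen hφ).abs hφ (ae_abs_detDen_le hφ)
  calc |∫ x, detDen φ x| ≤ ∫ x, (1 - φ.toFun x 3) * |detDen φ x| := abs_integral_detDen_le hφ
    _ ≤ (∫ x, (1 - φ.toFun (v + x) 3) * |detDen φ x|) +
          (lam + (∑ i, v i ^ 2) / lam ^ 3) * energy φ :=
        integral_mul_abs_detDen_le_translate hφ hlam v
    _ ≤ (lam + S / (lam ^ 2 * b)) * energy φ + (lam + lam) * energy φ := by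
        refine add_le_add (hle.trans (mul_le_mul_of_nonneg_left hD (by positivity))) ?_
        gcongr
    _ = (3 * lam + S / (lam ^ 2 * b)) * energy φ := by ring
    _ ≤ (3 * lam + S / (lam ^ 2 * b)) * ∫ x, skyrmeDensity φ x := by gcongr

theorem integral_detDen_eq (φ : SkyrmeMap) : ∫ x, detDen φ x = 2 * π ^ 2 * degree φ := by
  rw [degree]
  field_simp

end SkyrmeMap

open SkyrmeMap in
theorem skyrme_no_vanishing_general {c : ℝ} (hc : 0 < c) (M : ℝ) :
    ∃ R > 0, ∃ δ > 0, ∀ φ : SkyrmeMap, Integrable (skyrmeDensity φ) volume →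
      ∫ x, skyrmeDensity φ x ≤ M → c ≤ |degree φ| →
        δ ≤ ⨆ y : R3, ∫ x in eball y R, skyrmeDensity φ x := by
  have hM : 0 < |M| + 1 := by positivity
  -- Chosen so that `3 * lam * (|M| + 1)` is three quarters of `2 * π ^ 2 * c`.
  set lam : ℝ := 2 * π ^ 2 * c / (4 * (|M| + 1)) with hlam_def
  have hlam : 0 < lam := by positivity
  have hb : 0 < volume.real (eball 0 (lam ^ 2)) :=
    ENNReal.toReal_pos (measure_eball_pos (pow_pos hlam 2) 0).ne' (measure_eball_ne_top 0 _)
  refine ⟨lam ^ 2, by positivity, lam ^ 3 * volume.real (eball 0 (lam ^ 2)), by positivity,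
    fun φ hf hfM hdeg => ?_⟩
  have hS : 0 ≤ ⨆ y, ∫ x in eball y (lam ^ 2), skyrmeDensity φ x :=
    Real.iSup_nonneg fun y => integral_nonneg (skyrmeDensity_nonneg φ)
  have hbound := abs_integral_detDen_le_iSup_setIntegral hf hlam
  set S := ⨆ y, ∫ x in eball y (lam ^ 2), skyrmeDensity φ x
  set b := volume.real (eball 0 (lam ^ 2))
  have hle : 4 * lam * (|M| + 1) ≤ (3 * lam + S / (lam ^ 2 * b)) * (|M| + 1) := calc
    4 * lam * (|M| + 1) = 2 * π ^ 2 * c := by rw [hlam_def]; field_simp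
    _ ≤ |∫ x, detDen φ x| := by
        rw [integral_detDen_eq, abs_mul, abs_of_pos (by positivity)]
        gcongr
    _ ≤ (3 * lam + S / (lam ^ 2 * b)) * ∫ x, skyrmeDensity φ x := hbound
    _ ≤ (3 * lam + S / (lam ^ 2 * b)) * (|M| + 1) := by
        gcongr
        linarith [le_abs_self M]
  have hratio : lam ≤ S / (lam ^ 2 * b) := by linarith [le_of_mul_le_mul_right hle hM]
  calc lam ^ 3 * b = lam * (lam ^ 2 * b) := by ring
    _ ≤ S := (le_div_iff₀ (by positivity)).1 hratio

/-- no vanishing for sequences of fixed nonzero degree with bounded f_n. -/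
theorem skyrme_no_vanishing (k : ℤ) (hk : k ≠ 0)
    (φ : ℕ → SkyrmeMap) (hX : ∀ n, memX (φ n))
    (hdeg : ∀ n, degree (φ n) = (k : ℝ))
    (hint : ∀ n, Integrable
      (fun x => energyDensity (φ n) x + (nsq ((φ n).toFun x - northPole)) ^ 3) volume)
    (M : ℝ)
    (hM : ∀ n, (∫ x, (energyDensity (φ n) x + (nsq ((φ n).toFun x - northPole)) ^ 3)) ≤ M) :
    ¬ ∀ R > (0 : ℝ), Tendsto (fun n => ⨆ y : R3,
        ∫ x in eball y R,
          (energyDensity (φ n) x + (nsq ((φ n).toFun x - northPole)) ^ 3))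
      atTop (𝓝 0) := by
  intro hvan
  obtain ⟨R, hR, δ, hδ, hle⟩ := skyrme_no_vanishing_general (abs_pos.2 (Int.cast_ne_zero.2 hk)) M
  exact hδ.not_ge (ge_of_tendsto' (hvan R hR) fun n => hle (φ n) (hint n) (hM n) (by rw [hdeg n]))
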